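/- There exists a constant C > 0 such that for every f in the Zygmund space LlogL(-1,1), the finite Hilbert transform T(f) belongs to L^1(-1,1) and ‖T(f)‖_{L^1} ≤ C ‖f‖_{LlogL}. In particular, T : LlogL(-1,1) → L^1(-1,1) is a bounded linear operator. -/

import Mathlib

open MeasureTheory Set Filter

noncomputable section

/-- Lebesgue measure restricted to the interval `(-1, 1)`. -/
def μI : Measure ℝ := volume.restrict (Set.Ioo (-1 : ℝ) 1)

/-- The finite Hilbert transform: the principal-value limit
`T(f)(t) = lim_{ε→0⁺} (1/π) ∫_{x∈(-1,1), |x-t|≥ε} f(x)/(x-t) dx`. -/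
def FHT (f : ℝ → ℂ) (t : ℝ) : ℂ :=
  limUnder (nhdsWithin (0 : ℝ) (Set.Ioi 0)) fun ε : ℝ =>
    (Real.pi : ℂ)⁻¹ *
      ∫ x in {x : ℝ | x ∈ Set.Ioo (-1 : ℝ) 1 ∧ ε ≤ |x - t|}, f x / ((x : ℂ) - (t : ℂ))

/-- The operator `T̂(g)(x) = -(1-x²)^{-1/2} T(t ↦ √(1-t²) g(t))(x)`. -/
def hatT (g : ℝ → ℂ) (x : ℝ) : ℂ :=
  -((Real.sqrt (1 - x ^ 2) : ℂ))⁻¹ * FHT (fun t => (Real.sqrt (1 - t ^ 2) : ℂ) * g t) x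

/-- Membership in the Zygmund space `L log L(-1,1)`:
`f` is a.e. measurable on `(-1,1)` and `∫ |f| log⁺|f| < ∞`. -/
def MemLlogL (f : ℝ → ℂ) : Prop :=
  AEStronglyMeasurable f μI ∧
    IntegrableOn (fun x => ‖f x‖ * max (Real.log ‖f x‖) 0) (Set.Ioo (-1 : ℝ) 1)

/-- The distribution function `λ ↦ |{x ∈ (-1,1) : |f(x)| > λ}|`. -/
def distFun (f : ℝ → ℂ) (lam : ℝ) : ℝ :=
  (volume {x : ℝ | x ∈ Set.Ioo (-1 : ℝ) 1 ∧ lam < ‖f x‖}).toReal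

/-- The decreasing rearrangement `f*` of `f`, a function on `(0,2)`. -/
def decRearr (f : ℝ → ℂ) (t : ℝ) : ℝ :=
  sInf {lam : ℝ | 0 ≤ lam ∧ distFun f lam ≤ t}

/-- The `L log L` norm `‖f‖ = ∫_0^2 f*(t) log(2e/t) dt`. -/
def llogLNorm (f : ℝ → ℂ) : ℝ :=
  ∫ t in Set.Ioo (0 : ℝ) 2, decRearr f t * Real.log (2 * Real.exp 1 / t)

/-- The `L(log L)^α` norm `∫_0^2 f*(t) log^α(2e/t) dt` (for `α = 0` this is the `L¹` norm). -/
def zygNorm (α : ℝ) (f : ℝ → ℂ) : ℝ :=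
  ∫ t in Set.Ioo (0 : ℝ) 2, decRearr f t * Real.log (2 * Real.exp 1 / t) ^ α

/-- Membership in the Zygmund space `L(log L)^α(-1,1)`. -/
def MemZyg (α : ℝ) (f : ℝ → ℂ) : Prop :=
  AEStronglyMeasurable f μI ∧
    IntegrableOn (fun t => decRearr f t * Real.log (2 * Real.exp 1 / t) ^ α)
      (Set.Ioo (0 : ℝ) 2)

/-- Membership in `L(log L)²(-1,1)`: `∫ |f| (log(2+|f|))² < ∞`. -/
def MemLlogL2 (f : ℝ → ℂ) : Prop :=
  AEStronglyMeasurable f μI ∧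
    IntegrableOn (fun x => ‖f x‖ * Real.log (2 + ‖f x‖) ^ 2) (Set.Ioo (-1 : ℝ) 1)

/-- The constant `c(β,γ) = max{1/(1-β), 1/(1-γ), 1/(β+γ-1)}`. -/
def cBG (β γ : ℝ) : ℝ := max (max (1 / (1 - β)) (1 / (1 - γ))) (1 / (β + γ - 1))

lemma ker_integrable (x : ℝ) {y : ℝ} (hy : 0 < y) :
    Integrable (fun u : ℝ => ((u - x) ^ 2 + y ^ 2)⁻¹) := by
  have h := ((integrable_inv_one_add_sq.comp_div hy.ne').comp_sub_right x).const_mul ((y^2)⁻¹)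
  refine h.congr (Eventually.of_forall fun u => ?_)
  simp only
  rw [← mul_inv]; congr 1; field_simp; ring

lemma ker_integral (x : ℝ) {y : ℝ} (hy : 0 < y) :
    ∫ u : ℝ, ((u - x) ^ 2 + y ^ 2)⁻¹ = Real.pi / y := by
  have h : ∀ u : ℝ, ((u - x) ^ 2 + y ^ 2)⁻¹ = (y^2)⁻¹ * (1 + ((u - x) / y) ^ 2)⁻¹ := by
    intro u
    rw [← mul_inv]; congr 1; field_simp; ring
  simp_rw [h]
  rw [integral_const_mul, integral_sub_right_eq_self (fun u => (1 + (u / y) ^ 2)⁻¹),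
    Measure.integral_comp_div (fun u => (1 + u ^ 2)⁻¹), integral_univ_inv_one_add_sq,
    abs_of_pos hy, smul_eq_mul]
  field_simp

lemma poisson_formula (Ψ : ℂ → ℂ) (M η : ℝ) (hη : 0 < η)
    (hd : DifferentiableOn ℂ Ψ {z | -η < z.im}) (hb : ∀ z : ℂ, 0 ≤ z.im → ‖Ψ z‖ ≤ M)
    (x y : ℝ) (hy : 0 < y) :
    ∫ u : ℝ, Ψ u * ((((u - x) ^ 2 + y ^ 2)⁻¹ : ℝ) : ℂ) =
      ((Real.pi / y : ℝ) : ℂ) * Ψ (x + y * Complex.I) := by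
  set z0 : ℂ := x + y * Complex.I with hz0
  have hz0im : z0.im = y := by simp [hz0]
  have hz0re : z0.re = x := by simp [hz0]
  set zc : ℂ := x - y * Complex.I with hzc
  have hzcim : zc.im = -y := by simp [hzc]
  have hzn : ‖zc‖ = ‖z0‖ := by
    have : zc = (starRingEnd ℂ) z0 := by
      apply Complex.ext <;> simp [hzc, hz0]
    rw [this]; simp
  have hM : 0 ≤ M := (norm_nonneg _).trans (hb z0 (by rw [hz0im]; exact hy.le))
  set Θ : ℂ → ℂ := fun z => dslope Ψ z0 z / (z - zc) with hΘ
  have hopen : IsOpen {z : ℂ | -η < z.im} := isOpen_lt continuous_const Complex.continuous_im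
  have hds : DifferentiableOn ℂ (dslope Ψ z0) {z | -η < z.im} := by
    rw [Complex.differentiableOn_dslope]
    · exact hd
    · apply hopen.mem_nhds; simp [hz0im]; linarith
  have hΘd : DifferentiableOn ℂ Θ {z | 0 ≤ z.im} := by
    apply DifferentiableOn.div
    · exact hds.mono (fun z hz => by simp only [mem_ofPred_eq] at *; linarith)
    · fun_prop
    · intro z hz h
      have := congrArg Complex.im h
      simp only [Complex.sub_im, hzcim, Complex.zero_im, mem_ofPred_eq] at *
      linarith
  have hne : ∀ u : ℝ, (u : ℂ) ≠ z0 := by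
    intro u h
    have := congrArg Complex.im h
    simp [hz0im] at this; linarith
  have hker : ∀ u : ℝ, ((u : ℂ) - z0) * (u - zc) = (((u - x) ^ 2 + y ^ 2 : ℝ) : ℂ) := by
    intro u
    rw [hz0, hzc]; push_cast
    linear_combination (-(y:ℂ)^2) * Complex.I_sq
  have hΘr : ∀ u : ℝ, Θ u = (Ψ u - Ψ z0) * ((((u - x) ^ 2 + y ^ 2)⁻¹ : ℝ) : ℂ) := by
    intro u
    simp only [hΘ]
    rw [dslope_of_ne _ (hne u), slope_def_field, div_div, hker u, Complex.ofReal_inv, div_eq_mul_inv]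
  have hcont : Continuous (fun u : ℝ => Ψ u) := by
    have : ContinuousOn Ψ {z | -η < z.im} := hd.continuousOn
    exact this.comp_continuous Complex.continuous_ofReal (fun u => by simp [hη])
  have hint1 : Integrable (fun u : ℝ => Ψ u * ((((u - x) ^ 2 + y ^ 2)⁻¹ : ℝ) : ℂ)) := by
    apply Integrable.bdd_mul (c := M) (ker_integrable x hy).ofReal hcont.aestronglyMeasurable
    exact Eventually.of_forall fun u => hb u (by simp)
  have hint2 : Integrable (fun u : ℝ => Ψ z0 * ((((u - x) ^ 2 + y ^ 2)⁻¹ : ℝ) : ℂ)) :=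
    (ker_integrable x hy).ofReal.const_mul _
  have hintΘ : Integrable (fun u : ℝ => Θ u) := by
    refine (hint1.sub hint2).congr (Eventually.of_forall fun u => ?_)
    simp only [Pi.sub_apply]
    rw [hΘr]; ring
  -- decay
  have hdecay : ∀ R : ℝ, 2 * ‖z0‖ + 1 ≤ R → ∀ z : ℂ, 0 ≤ z.im → R ≤ ‖z‖ → ‖Θ z‖ ≤ 8 * M / R ^ 2 := by
    intro R hR z hz hzR
    have hRp : 0 < R := by have := norm_nonneg z0; linarith
    have h1 : R / 2 ≤ ‖z - z0‖ := by
      have := norm_sub_norm_le z z0; have := norm_nonneg z0; linarith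
    have h2 : R / 2 ≤ ‖z - zc‖ := by
      have := norm_sub_norm_le z zc; have := norm_nonneg z0; linarith
    have hzne : z ≠ z0 := by
      rintro rfl; simp at h1; linarith
    simp only [hΘ]
    rw [dslope_of_ne _ hzne, slope_def_field, div_div, norm_div, norm_mul]
    have h3 : ‖Ψ z - Ψ z0‖ ≤ 2 * M := by
      have := norm_sub_le (Ψ z) (Ψ z0)
      have := hb z hz
      have := hb z0 (by rw [hz0im]; exact hy.le)
      linarith
    calc ‖Ψ z - Ψ z0‖ / (‖z - z0‖ * ‖z - zc‖) ≤ (2 * M) / (R / 2 * (R / 2)) := by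
          gcongr
      _ = 8 * M / R ^ 2 := by field_simp; ring
  have hrect : ∀ R : ℝ, 2 * ‖z0‖ + 1 ≤ R → ‖∫ u : ℝ in (-R)..R, Θ u‖ ≤ 32 * M / R := by
    intro R hR
    have hRp : 0 < R := by have := norm_nonneg z0; linarith
    have H := Complex.integral_boundary_rect_eq_zero_of_differentiableOn Θ (((-R : ℝ) : ℂ)) (R + R * Complex.I) (by
      apply hΘd.mono
      intro z hz
      rw [Complex.mem_reProdIm] at hz
      have := hz.2
      simp at this
      rw [uIcc_of_le hRp.le] at this
      exact this.1)
    simp only [Complex.ofReal_re, Complex.ofReal_im, Complex.add_re, Complex.add_im, Complex.mul_re, Complex.mul_im,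
      Complex.I_re, Complex.I_im, mul_zero, mul_one, zero_mul, sub_zero, add_zero, zero_add, Complex.ofReal_zero, smul_eq_mul] at H
    have e1 : ‖∫ u : ℝ in (-R)..R, Θ (u + R * Complex.I)‖ ≤ 8 * M / R ^ 2 * |R - (-R)| := by
      apply intervalIntegral.norm_integral_le_of_norm_le_const
      intro u _
      apply hdecay R hR
      · simp [hRp.le]
      · have := Complex.abs_im_le_norm (u + R * Complex.I)
        simp at this; exact (le_abs_self R).trans this
    have e2 : ‖∫ v : ℝ in (0:ℝ)..R, Θ (R + v * Complex.I)‖ ≤ 8 * M / R ^ 2 * |R - 0| := by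
      apply intervalIntegral.norm_integral_le_of_norm_le_const
      intro v hv
      rw [uIoc_of_le hRp.le] at hv
      apply hdecay R hR
      · simp [hv.1.le]
      · have := Complex.abs_re_le_norm (R + v * Complex.I)
        simp at this; exact (le_abs_self R).trans this
    have e3 : ‖∫ v : ℝ in (0:ℝ)..R, Θ (((-R : ℝ) : ℂ) + v * Complex.I)‖ ≤ 8 * M / R ^ 2 * |R - 0| := by
      apply intervalIntegral.norm_integral_le_of_norm_le_const
      intro v hv
      rw [uIoc_of_le hRp.le] at hv
      apply hdecay R hR
      · simp [hv.1.le]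
      · have := Complex.abs_re_le_norm (((-R : ℝ) : ℂ) + v * Complex.I)
        simp only [Complex.add_re, Complex.ofReal_re, Complex.mul_re, Complex.I_re, mul_zero,
          Complex.ofReal_im, Complex.I_im, mul_one, sub_self, add_zero, abs_neg] at this
        exact (le_abs_self R).trans this
    have a1 : |R - (-R)| = 2 * R := by rw [abs_of_pos] <;> linarith
    have a2 : |R - 0| = R := by rw [abs_of_pos] <;> linarith
    rw [a1] at e1; rw [a2] at e2 e3
    have H' : ∫ u : ℝ in (-R)..R, Θ u = (∫ u : ℝ in (-R)..R, Θ (u + R * Complex.I))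
        - Complex.I * (∫ v : ℝ in (0:ℝ)..R, Θ (R + v * Complex.I))
        + Complex.I * (∫ v : ℝ in (0:ℝ)..R, Θ (((-R : ℝ) : ℂ) + v * Complex.I)) := by
      linear_combination H
    rw [H']
    have n1 := norm_add_le ((∫ u : ℝ in (-R)..R, Θ (u + R * Complex.I))
        - Complex.I * (∫ v : ℝ in (0:ℝ)..R, Θ (R + v * Complex.I)))
        (Complex.I * (∫ v : ℝ in (0:ℝ)..R, Θ (((-R : ℝ) : ℂ) + v * Complex.I)))
    have n2 := norm_sub_le (∫ u : ℝ in (-R)..R, Θ (u + R * Complex.I))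
        (Complex.I * (∫ v : ℝ in (0:ℝ)..R, Θ (R + v * Complex.I)))
    rw [norm_mul, Complex.norm_I, one_mul] at n1 n2
    have : 32 * M / R = 8 * M / R ^ 2 * (2 * R) + 8 * M / R ^ 2 * R + 8 * M / R ^ 2 * R := by
      field_simp; ring
    rw [this]; linarith
  have hlim : Tendsto (fun R : ℝ => ∫ u : ℝ in (-R)..R, Θ u) atTop (nhds (∫ u : ℝ, Θ u)) :=
    intervalIntegral_tendsto_integral hintΘ tendsto_neg_atTop_atBot tendsto_id
  have hlim0 : Tendsto (fun R : ℝ => ∫ u : ℝ in (-R)..R, Θ u) atTop (nhds 0) := by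
    apply squeeze_zero_norm' (a := fun R => 32 * M / R)
    · filter_upwards [eventually_ge_atTop (2 * ‖z0‖ + 1)] with R hR using hrect R hR
    · exact tendsto_const_nhds.div_atTop tendsto_id
  have hzero := tendsto_nhds_unique hlim hlim0
  have : ∫ u : ℝ, Θ u = (∫ u : ℝ, Ψ u * ((((u - x) ^ 2 + y ^ 2)⁻¹ : ℝ) : ℂ)) -
      ∫ u : ℝ, Ψ z0 * ((((u - x) ^ 2 + y ^ 2)⁻¹ : ℝ) : ℂ) := by
    rw [← integral_sub hint1 hint2]
    congr 1; ext u; rw [hΘr]; ring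
  rw [hzero, integral_const_mul, integral_complex_ofReal, ker_integral x hy] at this
  linear_combination -this

/-- Cauchy transform. -/
def CT (f : ℝ → ℂ) (z : ℂ) : ℂ := (Real.pi : ℂ)⁻¹ * ∫ t : ℝ, f t / ((t : ℂ) - z)

lemma norm_sub_ge_im (t : ℝ) (z : ℂ) : |z.im| ≤ ‖(t : ℂ) - z‖ := by
  have := Complex.abs_im_le_norm ((t : ℂ) - z)
  simpa using this

lemma ct_integrable {f : ℝ → ℂ} (hf : Integrable f) {z : ℂ} (hz : 0 < z.im) :
    Integrable (fun t : ℝ => f t / ((t : ℂ) - z)) := by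
  have h0 : ∀ t : ℝ, (t : ℂ) - z ≠ 0 := fun t h => by
    have := norm_sub_ge_im t z
    rw [h, norm_zero, abs_of_pos hz] at this; linarith
  simp_rw [div_eq_mul_inv]
  refine hf.mul_bdd (c := z.im⁻¹) ?_ ?_
  · exact (Continuous.inv₀ (by fun_prop) h0).aestronglyMeasurable
  · refine Eventually.of_forall fun t => ?_
    rw [norm_inv]
    apply inv_anti₀ hz
    have := norm_sub_ge_im t z
    rwa [abs_of_pos hz] at this

lemma ct_bound {f : ℝ → ℂ} (hf : Integrable f) {z : ℂ} (hz : 0 < z.im) :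
    ‖CT f z‖ ≤ Real.pi⁻¹ * (z.im⁻¹ * ∫ t, ‖f t‖) := by
  unfold CT
  rw [norm_mul, norm_inv, Complex.norm_real, Real.norm_of_nonneg Real.pi_pos.le]
  gcongr
  rw [← integral_const_mul]
  refine norm_integral_le_of_norm_le (hf.norm.const_mul _) (Eventually.of_forall fun t => ?_)
  rw [norm_div, div_eq_inv_mul]
  gcongr
  have := norm_sub_ge_im t z
  rwa [abs_of_pos hz] at this

lemma ct_diff {f : ℝ → ℂ} (hf : Integrable f) : DifferentiableOn ℂ (CT f) {z | 0 < z.im} := by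
  intro z hz
  apply DifferentiableAt.differentiableWithinAt
  simp only [mem_ofPred_eq] at hz
  unfold CT
  apply DifferentiableAt.const_mul
  have hs : {w : ℂ | z.im / 2 < w.im} ∈ nhds z := by
    apply (isOpen_lt continuous_const Complex.continuous_im).mem_nhds
    simp only [mem_ofPred_eq]; linarith
  have h0 : ∀ w : ℂ, 0 < w.im → ∀ t : ℝ, (t : ℂ) - w ≠ 0 := fun w hw t h => by
    have := norm_sub_ge_im t w
    rw [h, norm_zero, abs_of_pos hw] at this; linarith
  have := hasDerivAt_integral_of_dominated_loc_of_deriv_le (μ := volume)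
    (F := fun (w : ℂ) (t : ℝ) => f t / ((t : ℂ) - w))
    (F' := fun (w : ℂ) (t : ℝ) => f t * (((t : ℂ) - w) ^ 2)⁻¹) (x₀ := z)
    (bound := fun t => ‖f t‖ * ((z.im / 2) ^ 2)⁻¹) hs ?_ (ct_integrable hf hz) ?_ ?_ ?_ ?_
  · exact this.2.differentiableAt
  · filter_upwards [hs] with w hw
    have hw' : z.im / 2 < w.im := hw
    exact (ct_integrable hf (z := w) (by linarith)).aestronglyMeasurable
  · apply hf.aestronglyMeasurable.mul
    exact (Continuous.inv₀ (by fun_prop) (fun t => pow_ne_zero 2 (h0 z hz t))).aestronglyMeasurable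
  · refine Eventually.of_forall fun t w hw => ?_
    simp only [mem_ofPred_eq] at hw
    rw [norm_mul, norm_inv, norm_pow]
    gcongr
    have := norm_sub_ge_im t w
    rw [abs_of_pos (by linarith)] at this; linarith
  · exact hf.norm.mul_const _
  · refine Eventually.of_forall fun t w hw => ?_
    simp only [mem_ofPred_eq] at hw
    have hw0 := h0 w (by linarith) t
    have h1 : HasDerivAt (fun w : ℂ => (t : ℂ) - w) (-1) w := by
      simpa using (hasDerivAt_id w).const_sub (t : ℂ)
    have h2 := (hasDerivAt_const w (f t)).div h1 hw0
    refine HasDerivAt.congr_deriv (f' := (0 * ((t : ℂ) - w) - f t * (-1)) / ((t : ℂ) - w) ^ 2) h2 ?_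
    rw [div_eq_mul_inv]; ring

lemma ct_shift_diff {f : ℝ → ℂ} (hf : Integrable f) {η : ℝ} :
    DifferentiableOn ℂ (fun z => CT f (z + η * Complex.I)) {z | -η < z.im} := by
  apply (ct_diff hf).comp (by fun_prop)
  intro z hz
  simp only [mem_ofPred_eq] at *
  simp; linarith

lemma ct_line_cont {f : ℝ → ℂ} (hf : Integrable f) {η : ℝ} (hη : 0 < η) :
    Continuous (fun u : ℝ => CT f (u + η * Complex.I)) :=
  (ct_diff hf).continuousOn.comp_continuous (by fun_prop) (fun u => by simp [hη])

lemma ct_shift_bound {f : ℝ → ℂ} (hf : Integrable f) {η : ℝ} (hη : 0 < η) (z : ℂ) (hz : 0 ≤ z.im) :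
    ‖CT f (z + η * Complex.I)‖ ≤ Real.pi⁻¹ * (η⁻¹ * ∫ t, ‖f t‖) := by
  refine (ct_bound hf (by simp; linarith)).trans ?_
  have : 0 ≤ ∫ t, ‖f t‖ := integral_nonneg fun t => norm_nonneg _
  have := Real.pi_pos
  gcongr
  simp [hz]

lemma ct_semigroup {f : ℝ → ℂ} (hf : Integrable f) {η : ℝ} (hη : 0 < η) (x : ℝ) {y : ℝ} (hy : 0 < y) :
    ∫ u : ℝ, CT f (u + η * Complex.I) * ((((u - x) ^ 2 + y ^ 2)⁻¹ : ℝ) : ℂ) =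
      ((Real.pi / y : ℝ) : ℂ) * CT f (x + y * Complex.I + η * Complex.I) :=
  poisson_formula (fun z => CT f (z + η * Complex.I)) _ η hη (ct_shift_diff hf)
    (ct_shift_bound hf hη) x y hy

def psi (s : ℝ) : ℝ := (1 + s) * Real.log (1 + s)

lemma psi_ge {s : ℝ} (hs : 0 ≤ s) : s ≤ psi s := by
  unfold psi
  have h := Real.one_sub_inv_le_log_of_pos (show 0 < 1 + s by linarith)
  have : (1 + s) * (1 - (1 + s)⁻¹) = s := by field_simp; ring
  nlinarith

lemma psi_nonneg {s : ℝ} (hs : 0 ≤ s) : 0 ≤ psi s := hs.trans (psi_ge hs)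

lemma psi_mono {s t : ℝ} (hs : 0 ≤ s) (hst : s ≤ t) : psi s ≤ psi t := by
  unfold psi
  have h1 : Real.log (1 + s) ≤ Real.log (1 + t) := Real.log_le_log (by linarith) (by linarith)
  have h2 : 0 ≤ Real.log (1 + s) := Real.log_nonneg (by linarith)
  nlinarith

lemma psi_le {s : ℝ} (hs : 0 ≤ s) : psi s ≤ s * (1 + Real.log (1 + s)) := by
  unfold psi
  have := Real.log_le_sub_one_of_pos (show 0 < 1 + s by linarith)
  nlinarith

lemma psi_le_sq {s : ℝ} (hs : 0 ≤ s) : psi s ≤ s + s ^ 2 := by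
  unfold psi
  have := Real.log_le_sub_one_of_pos (show 0 < 1 + s by linarith)
  nlinarith

lemma psi_continuousOn : ContinuousOn psi (Ici 0) := by
  unfold psi
  apply ContinuousOn.mul (by fun_prop)
  apply ContinuousOn.log (by fun_prop)
  intro x hx
  have : (0:ℝ) ≤ x := hx
  positivity

lemma psi_measurable : Measurable psi := by
  unfold psi; fun_prop

lemma pointwise_ineq (F : ℂ) (h : 0 < F.re) :
    ‖F‖ ≤ 2 * (F.re + F.re * Real.log F.re) - 2 * (F * Complex.log F).re := by
  have hF : F ≠ 0 := by rintro rfl; simp at h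
  have hr : 0 < ‖F‖ := norm_pos_iff.mpr hF
  set r := ‖F‖ with hrdef
  set θ := F.arg with hθ
  have hre : F.re = r * Real.cos θ := (Complex.norm_mul_cos_arg F).symm
  have him : F.im = r * Real.sin θ := (Complex.norm_mul_sin_arg F).symm
  have hc : 0 < Real.cos θ := by
    rw [hre] at h; exact (mul_pos_iff_of_pos_left hr).mp h
  have hlog : (F * Complex.log F).re = F.re * Real.log r - F.im * θ := by
    rw [Complex.mul_re, Complex.log_re, Complex.log_im]
  have hlr : Real.log F.re = Real.log r + Real.log (Real.cos θ) := by
    rw [hre, Real.log_mul hr.ne' hc.ne']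
  rw [hlog, hlr, hre, him]
  set c := Real.cos θ
  set s := Real.sin θ with hs
  have hsq : s ^ 2 + c ^ 2 = 1 := Real.sin_sq_add_cos_sq θ
  have hc1 : c ≤ 1 := Real.cos_le_one θ
  have hths : s ^ 2 ≤ θ * s := by
    have h1 : |s| ≤ |θ| := Real.abs_sin_le_abs
    have h2 : 0 ≤ θ * s := by
      rcases le_total 0 θ with h0 | h0
      · exact mul_nonneg h0 (Real.sin_nonneg_of_nonneg_of_le_pi h0 (Complex.arg_le_pi F))
      · exact mul_nonneg_of_nonpos_of_nonpos h0
          (Real.sin_nonpos_of_nonpos_of_neg_pi_le h0 (Complex.neg_pi_lt_arg F).le)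
    rw [← abs_of_nonneg h2, abs_mul, ← sq_abs]
    nlinarith [abs_nonneg s]
  have hclog : -(1/2) ≤ c * Real.log c := by
    have h1 := Real.log_le_sub_one_of_pos (show 0 < (2 * c)⁻¹ by positivity)
    rw [Real.log_inv, Real.log_mul (by norm_num) hc.ne'] at h1
    have h2 : Real.log 2 ≤ 1 := by
      have := Real.log_two_lt_d9; linarith
    have h3 : c * (2 * c)⁻¹ = 1 / 2 := by field_simp
    nlinarith
  have key : 1 / 2 ≤ c + c * Real.log c + θ * s := by nlinarith
  nlinarith

lemma ct_im {h : ℝ → ℝ} (hh : Integrable h) (x : ℝ) {y : ℝ} (hy : 0 < y) :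
    (CT (fun t => (h t : ℂ)) (x + y * Complex.I)).im =
      Real.pi⁻¹ * ∫ t, h t * (y * ((t - x) ^ 2 + y ^ 2)⁻¹) := by
  unfold CT
  rw [← Complex.ofReal_inv, Complex.im_ofReal_mul]
  congr 1
  have hi := ct_integrable hh.ofReal (z := x + y * Complex.I) (by simpa using hy)
  have := Complex.imCLM.integral_comp_comm hi
  simp only [Complex.imCLM_apply] at this
  refine this.symm.trans ?_
  congr 1; ext t
  have : (t : ℂ) - (x + y * Complex.I) = ((t - x : ℝ) : ℂ) - (y : ℝ) * Complex.I := by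
    push_cast; ring
  simp only [Complex.coe_algebraMap]
  rw [this, Complex.div_im]
  simp [Complex.normSq_apply]
  rw [div_eq_mul_inv]; ring_nf

lemma jensen {h k : ℝ → ℝ} (hh : ∀ t, 0 ≤ h t) (hk : ∀ t, 0 ≤ k t) (ki : Integrable k)
    (hki : ∫ t, k t = Real.pi) (hhk : Integrable fun t => h t * k t)
    (hpk : Integrable fun t => psi (h t) * k t) :
    (1 + Real.pi⁻¹ * ∫ t, h t * k t) * Real.log (1 + Real.pi⁻¹ * ∫ t, h t * k t) ≤
      Real.pi⁻¹ * ∫ t, psi (h t) * k t := by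
  set a := 1 + Real.pi⁻¹ * ∫ t, h t * k t with ha
  have hJ : ∫ t, h t * k t = Real.pi * (a - 1) := by
    rw [ha]; have := Real.pi_pos; field_simp; ring
  have hapos : 0 < a := by
    have : 0 ≤ ∫ t, h t * k t := integral_nonneg fun t => mul_nonneg (hh t) (hk t)
    have := Real.pi_pos
    positivity
  have hpt : ∀ t, (Real.log a + 1) * (k t + h t * k t) - a * k t ≤ psi (h t) * k t := by
    intro t
    have hb : 0 < 1 + h t := by linarith [hh t]
    have h1 := Real.log_le_sub_one_of_pos (div_pos hapos hb)
    rw [Real.log_div hapos.ne' hb.ne'] at h1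
    have h2 : (1 + h t) * (a / (1 + h t)) = a := by field_simp
    have h3 : (1 + h t) * Real.log a ≤ psi (h t) + a - (1 + h t) := by
      unfold psi; nlinarith
    nlinarith [hk t]
  have hI := integral_mono (((ki.add hhk).const_mul (Real.log a + 1)).sub (ki.const_mul a)) hpk
    (fun t => by simpa using hpt t)
  have e : ∫ t, ((fun t => (Real.log a + 1) * (k + fun t => h t * k t) t) - fun t => a * k t) t
      = (Real.log a + 1) * (Real.pi + Real.pi * (a - 1)) - a * Real.pi := by
    simp only [Pi.sub_apply, Pi.add_apply]
    have e1 : Integrable (fun t => (Real.log a + 1) * (k t + h t * k t)) :=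
      (ki.add hhk).const_mul (Real.log a + 1)
    rw [integral_sub e1 (ki.const_mul a), integral_const_mul,
      integral_const_mul, integral_add ki hhk, hki, hJ]
  rw [e] at hI
  have hpi := Real.pi_pos
  rw [← div_eq_inv_mul, le_div_iff₀ hpi]
  nlinarith

lemma key_real {h : ℝ → ℝ} (hh : ∀ t, 0 ≤ h t) (hi : Integrable h)
    (hp : Integrable fun t => psi (h t)) (hp1 : ∫ t, psi (h t) ≤ 1) {η : ℝ} (hη : 0 < η) :
    ∫ x : ℝ, ‖CT (fun t => (h t : ℂ)) (x + η * Complex.I)‖ * (1 + x ^ 2)⁻¹ ≤ 200 := by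
  have hpi := Real.pi_pos
  have hpi3 := Real.pi_gt_three
  have hpi4 := Real.pi_le_four
  have h1 : ∫ t, h t ≤ 1 := (integral_mono hi hp fun t => psi_ge (hh t)).trans hp1
  have hic : Integrable (fun t => (h t : ℂ)) := hi.ofReal
  have hpc : Integrable (fun t => (psi (h t) : ℂ)) := hp.ofReal
  have hn : ∫ t, ‖(h t : ℂ)‖ ≤ 1 := by
    simpa [abs_of_nonneg (hh _)] using h1
  have hpn : ∫ t, ‖(psi (h t) : ℂ)‖ ≤ 1 := by
    simpa [abs_of_nonneg (psi_nonneg (hh _))] using hp1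
  set F : ℂ → ℂ := fun z => 1 - Complex.I * CT (fun t => (h t : ℂ)) (z + η * Complex.I) with hF
  have hFre : ∀ z : ℂ, (F z).re = 1 + (CT (fun t => (h t : ℂ)) (z + η * Complex.I)).im := by
    intro z; simp [hF]
  have hCTim : ∀ z : ℂ, 0 < z.im → 0 ≤ (CT (fun t => (h t : ℂ)) z).im := by
    intro z hz
    have : z = (z.re : ℂ) + (z.im : ℂ) * Complex.I := (Complex.re_add_im z).symm
    rw [this, ct_im hi _ hz]
    have : 0 ≤ ∫ t, h t * (z.im * ((t - z.re) ^ 2 + z.im ^ 2)⁻¹) :=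
      integral_nonneg fun t => mul_nonneg (hh t) (by positivity)
    positivity
  have hFre1 : ∀ z : ℂ, -η < z.im → 1 ≤ (F z).re := by
    intro z hz
    rw [hFre]
    have := hCTim (z + η * Complex.I) (by simp; linarith)
    linarith
  have hFd : DifferentiableOn ℂ F {z | -η < z.im} := by
    have := ct_shift_diff (η := η) hic
    exact (differentiableOn_const _).sub ((differentiableOn_const _).mul this)
  have hn0 : 0 ≤ ∫ t, ‖(h t : ℂ)‖ := integral_nonneg fun t => norm_nonneg _
  set M := 1 + Real.pi⁻¹ * (η⁻¹ * ∫ t, ‖(h t : ℂ)‖) with hMdef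
  have hFb : ∀ z : ℂ, 0 ≤ z.im → ‖F z‖ ≤ M := by
    intro z hz
    refine (norm_sub_le _ _).trans ?_
    rw [norm_one, norm_mul, Complex.norm_I, one_mul]
    have := ct_shift_bound hic hη z hz
    rw [hMdef]; linarith
  have hM1 : 1 ≤ M := by rw [hMdef]; have : 0 ≤ Real.pi⁻¹ * (η⁻¹ * ∫ t, ‖(h t : ℂ)‖) := by positivity
                         linarith
  have hlogb : ∀ z : ℂ, -η < z.im → ‖F z * Complex.log (F z)‖ ≤ ‖F z‖ * (‖F z‖ + 4) := by
    intro z hz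
    rw [norm_mul]
    gcongr
    have h1 := hFre1 z hz
    have h2 : 1 ≤ ‖F z‖ := h1.trans (Complex.re_le_norm _)
    refine (Complex.norm_le_abs_re_add_abs_im _).trans ?_
    rw [Complex.log_re, Complex.log_im]
    have h3 : |Complex.arg (F z)| ≤ Real.pi := Complex.abs_arg_le_pi _
    rw [abs_of_nonneg (Real.log_nonneg h2)]
    have := Real.log_le_sub_one_of_pos (show 0 < ‖F z‖ by linarith)
    linarith
  have hΨd : DifferentiableOn ℂ (fun z => F z * Complex.log (F z)) {z | -η < z.im} := by
    apply hFd.mul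
    apply hFd.clog
    intro z hz
    left
    have := hFre1 z hz
    linarith
  have hΨb : ∀ z : ℂ, 0 ≤ z.im → ‖F z * Complex.log (F z)‖ ≤ M * (M + 4) := by
    intro z hz
    refine (hlogb z (by linarith)).trans ?_
    have := hFb z hz
    gcongr
  have P1 := poisson_formula F M η hη hFd hFb 0 1 one_pos
  have P2 := poisson_formula _ _ η hη hΨd hΨb 0 1 one_pos
  have P3 := ct_semigroup hpc hη 0 one_pos
  simp only [sub_zero, one_pow, Complex.ofReal_zero, Complex.ofReal_one, one_mul, zero_add, div_one,
    add_comm _ (1:ℝ)] at P1 P2 P3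
  -- continuity
  have hFc : Continuous (fun u : ℝ => F u) :=
    hFd.continuousOn.comp_continuous Complex.continuous_ofReal (fun u => by simp [hη])
  have hΨc : Continuous (fun u : ℝ => F u * Complex.log (F u)) :=
    hΨd.continuousOn.comp_continuous Complex.continuous_ofReal (fun u => by simp [hη])
  have hw := integrable_inv_one_add_sq
  have iF : Integrable (fun u : ℝ => F u * (((1 + u ^ 2)⁻¹ : ℝ) : ℂ)) :=
    hw.ofReal.bdd_mul (c := M) hFc.aestronglyMeasurable (Eventually.of_forall fun u => hFb u (by simp))
  have iΨ : Integrable (fun u : ℝ => F u * Complex.log (F u) * (((1 + u ^ 2)⁻¹ : ℝ) : ℂ)) :=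
    hw.ofReal.bdd_mul (c := M * (M + 4)) hΨc.aestronglyMeasurable
      (Eventually.of_forall fun u => hΨb u (by simp))
  have iC : Integrable (fun u : ℝ => CT (fun t => (psi (h t) : ℂ)) (u + η * Complex.I) * (((1 + u ^ 2)⁻¹ : ℝ) : ℂ)) :=
    hw.ofReal.bdd_mul (c := _) (ct_line_cont hpc hη).aestronglyMeasurable
      (Eventually.of_forall fun u => ct_shift_bound hpc hη u (by simp))
  have iFr := iF.re
  have iΨr := iΨ.re
  have iCi := iC.im
  have R1 : ∫ u : ℝ, (F u).re * (1 + u ^ 2)⁻¹ = Real.pi * (F Complex.I).re := by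
    have := Complex.reCLM.integral_comp_comm iF
    rw [P1] at this
    simp only [Complex.reCLM_apply, Complex.re_mul_ofReal, Complex.re_ofReal_mul] at this
    exact this
  have R2 : ∫ u : ℝ, (F u * Complex.log (F u)).re * (1 + u ^ 2)⁻¹ =
      Real.pi * (F Complex.I * Complex.log (F Complex.I)).re := by
    have := Complex.reCLM.integral_comp_comm iΨ
    rw [P2] at this
    simp only [Complex.reCLM_apply, Complex.re_mul_ofReal, Complex.re_ofReal_mul] at this
    exact this
  have R3 : ∫ u : ℝ, (CT (fun t => (psi (h t) : ℂ)) (u + η * Complex.I)).im * (1 + u ^ 2)⁻¹ =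
      Real.pi * (CT (fun t => (psi (h t) : ℂ)) (Complex.I + η * Complex.I)).im := by
    have := Complex.imCLM.integral_comp_comm iC
    rw [P3] at this
    simp only [Complex.imCLM_apply, Complex.im_mul_ofReal, Complex.im_ofReal_mul] at this
    exact this
  -- Jensen
  have hJ : ∀ u : ℝ, (F u).re * Real.log (F u).re ≤ (CT (fun t => (psi (h t) : ℂ)) (u + η * Complex.I)).im := by
    intro u
    rw [hFre, ct_im hi _ hη, ct_im hp _ hη]
    have kb : ∀ t : ℝ, ‖η * ((t - u) ^ 2 + η ^ 2)⁻¹‖ ≤ η * (η ^ 2)⁻¹ := by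
      intro t
      rw [Real.norm_of_nonneg (by positivity)]
      gcongr
      nlinarith [sq_nonneg (t - u)]
    have ki := (ker_integrable u hη).const_mul η
    apply jensen hh (fun t => by positivity) ki
    · rw [integral_const_mul, ker_integral u hη]; field_simp
    · exact hi.mul_bdd (c := η * (η ^ 2)⁻¹) ki.aestronglyMeasurable (Eventually.of_forall kb)
    · exact hp.mul_bdd (c := η * (η ^ 2)⁻¹) ki.aestronglyMeasurable (Eventually.of_forall kb)
  have hFI : ‖F Complex.I‖ ≤ 2 := by
    refine (norm_sub_le _ _).trans ?_
    rw [norm_one, norm_mul, Complex.norm_I, one_mul]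
    have := ct_bound hic (z := Complex.I + η * Complex.I) (by simp; linarith)
    have h2 : Real.pi⁻¹ * ((Complex.I + η * Complex.I).im⁻¹ * ∫ t, ‖(h t : ℂ)‖) ≤ 1 * (1 * 1) := by
      gcongr
      · apply mul_nonneg _ (by assumption)
        apply inv_nonneg.mpr; simp; linarith
      · apply inv_le_one_of_one_le₀; linarith
      · apply inv_le_one_of_one_le₀; simp [hη.le]
    linarith
  have hpsiI : (CT (fun t => (psi (h t) : ℂ)) (Complex.I + η * Complex.I)).im ≤ 1 := by
    refine (Complex.im_le_norm _).trans ?_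
    have := ct_bound hpc (z := Complex.I + η * Complex.I) (by simp; linarith)
    have hn0' : 0 ≤ ∫ t, ‖(psi (h t) : ℂ)‖ := integral_nonneg fun t => norm_nonneg _
    have h2 : Real.pi⁻¹ * ((Complex.I + η * Complex.I).im⁻¹ * ∫ t, ‖(psi (h t) : ℂ)‖) ≤ 1 * (1 * 1) := by
      gcongr
      · apply mul_nonneg _ (by assumption)
        apply inv_nonneg.mpr; simp; linarith
      · apply inv_le_one_of_one_le₀; linarith
      · apply inv_le_one_of_one_le₀; simp [hη.le]
    linarith
  have hΨI : -12 ≤ (F Complex.I * Complex.log (F Complex.I)).re := by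
    have h1 := hlogb Complex.I (by simp; linarith)
    have h2 := Complex.abs_re_le_norm (F Complex.I * Complex.log (F Complex.I))
    have h3 := neg_abs_le (F Complex.I * Complex.log (F Complex.I)).re
    have h4 := norm_nonneg (F Complex.I)
    nlinarith
  have hFIre : (F Complex.I).re ≤ 2 := (Complex.re_le_norm _).trans hFI
  -- main
  have hmain : ∀ u : ℝ, ‖CT (fun t => (h t : ℂ)) (u + η * Complex.I)‖ * (1 + u ^ 2)⁻¹ ≤
      (1 + u ^ 2)⁻¹ + (2 * ((F u).re * (1 + u ^ 2)⁻¹) +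
        2 * ((CT (fun t => (psi (h t) : ℂ)) (u + η * Complex.I)).im * (1 + u ^ 2)⁻¹)
        - 2 * ((F u * Complex.log (F u)).re * (1 + u ^ 2)⁻¹)) := by
    intro u
    have hwp : 0 < (1 + u ^ 2)⁻¹ := by positivity
    have h1 := pointwise_ineq (F u) (by have := hFre1 u (by simp [hη]); linarith)
    have h2 := hJ u
    have h3 : ‖CT (fun t => (h t : ℂ)) (u + η * Complex.I)‖ ≤ 1 + ‖F u‖ := by
      have : Complex.I * CT (fun t => (h t : ℂ)) (u + η * Complex.I) = 1 - F u := by simp [hF]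
      have h4 : ‖Complex.I * CT (fun t => (h t : ℂ)) (u + η * Complex.I)‖ = ‖1 - F u‖ := by rw [this]
      rw [norm_mul, Complex.norm_I, one_mul] at h4
      rw [h4]
      simpa using norm_sub_le 1 (F u)
    have h5 : ‖CT (fun t => (h t : ℂ)) (u + η * Complex.I)‖ ≤ 1 + (2 * (F u).re +
        2 * (CT (fun t => (psi (h t) : ℂ)) (u + η * Complex.I)).im
        - 2 * (F u * Complex.log (F u)).re) := by linarith
    have := mul_le_mul_of_nonneg_right h5 hwp.le
    linarith
  have iA : Integrable (fun u : ℝ => (F u).re * (1 + u ^ 2)⁻¹) := by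
    refine iFr.congr (Eventually.of_forall fun u => ?_)
    exact Complex.re_mul_ofReal _ _
  have iB : Integrable (fun u : ℝ => (CT (fun t => (psi (h t) : ℂ)) (u + η * Complex.I)).im * (1 + u ^ 2)⁻¹) := by
    refine iCi.congr (Eventually.of_forall fun u => ?_)
    exact Complex.im_mul_ofReal _ _
  have iD : Integrable (fun u : ℝ => (F u * Complex.log (F u)).re * (1 + u ^ 2)⁻¹) := by
    refine iΨr.congr (Eventually.of_forall fun u => ?_)
    exact Complex.re_mul_ofReal _ _
  have iAB : Integrable (fun u : ℝ => 2 * ((F u).re * (1 + u ^ 2)⁻¹) +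
        2 * ((CT (fun t => (psi (h t) : ℂ)) (u + η * Complex.I)).im * (1 + u ^ 2)⁻¹)) :=
    (iA.const_mul 2).add (iB.const_mul 2)
  have iABD : Integrable (fun u : ℝ => 2 * ((F u).re * (1 + u ^ 2)⁻¹) +
        2 * ((CT (fun t => (psi (h t) : ℂ)) (u + η * Complex.I)).im * (1 + u ^ 2)⁻¹)
        - 2 * ((F u * Complex.log (F u)).re * (1 + u ^ 2)⁻¹)) := iAB.sub (iD.const_mul 2)
  calc _ ≤ ∫ u : ℝ, ((1 + u ^ 2)⁻¹ + (2 * ((F u).re * (1 + u ^ 2)⁻¹) +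
        2 * ((CT (fun t => (psi (h t) : ℂ)) (u + η * Complex.I)).im * (1 + u ^ 2)⁻¹)
        - 2 * ((F u * Complex.log (F u)).re * (1 + u ^ 2)⁻¹))) := by
        apply integral_mono_of_nonneg
        · exact Eventually.of_forall fun u => by positivity
        · exact hw.add iABD
        · exact Eventually.of_forall hmain
    _ = Real.pi + (2 * (Real.pi * (F Complex.I).re) +
        2 * (Real.pi * (CT (fun t => (psi (h t) : ℂ)) (Complex.I + η * Complex.I)).im)
        - 2 * (Real.pi * (F Complex.I * Complex.log (F Complex.I)).re)) := by
        rw [integral_add hw iABD, integral_univ_inv_one_add_sq]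
        congr 1
        rw [← R1, ← R2, ← R3, ← integral_const_mul, ← integral_const_mul, ← integral_const_mul]
        rw [← integral_add (iA.const_mul 2) (iB.const_mul 2), ← integral_sub iAB (iD.const_mul 2)]
    _ ≤ 200 := by nlinarith


lemma ct_add {f g : ℝ → ℂ} (hf : Integrable f) (hg : Integrable g) {z : ℂ} (hz : 0 < z.im) :
    CT (fun t => f t + g t) z = CT f z + CT g z := by
  unfold CT
  rw [← mul_add, ← integral_add (ct_integrable hf hz) (ct_integrable hg hz)]
  congr 2; ext t; rw [add_div]

lemma ct_mul (c : ℂ) (f : ℝ → ℂ) (z : ℂ) :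
    CT (fun t => c * f t) z = c * CT f z := by
  unfold CT
  simp_rw [mul_div_assoc]
  rw [integral_const_mul]; ring

lemma ct_sub {f g : ℝ → ℂ} (hf : Integrable f) (hg : Integrable g) {z : ℂ} (hz : 0 < z.im) :
    CT (fun t => f t - g t) z = CT f z - CT g z := by
  unfold CT
  rw [← mul_sub, ← integral_sub (ct_integrable hf hz) (ct_integrable hg hz)]
  congr 2; ext t; rw [sub_div]

lemma ct_w_integrable {f : ℝ → ℂ} (hf : Integrable f) {η : ℝ} (hη : 0 < η) :
    Integrable (fun x : ℝ => CT f (x + η * Complex.I) * (((1 + x ^ 2)⁻¹ : ℝ) : ℂ)) :=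
  integrable_inv_one_add_sq.ofReal.bdd_mul (c := _) (ct_line_cont hf hη).aestronglyMeasurable
      (Eventually.of_forall fun u => ct_shift_bound hf hη u (by simp))

lemma ct_w_integrable_norm {f : ℝ → ℂ} (hf : Integrable f) {η : ℝ} (hη : 0 < η) :
    Integrable (fun x : ℝ => ‖CT f (x + η * Complex.I)‖ * (1 + x ^ 2)⁻¹) := by
  refine (ct_w_integrable hf hη).norm.congr (Eventually.of_forall fun x => ?_)
  simp only [norm_mul, Complex.norm_real]
  rw [Real.norm_of_nonneg (by positivity)]

lemma key_complex {f : ℝ → ℂ} (hf : Integrable f) {lam : ℝ} (hl : 0 < lam)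
    (hp : Integrable fun t => psi (‖f t‖ / lam)) (hp1 : ∫ t, psi (‖f t‖ / lam) ≤ 1)
    {η : ℝ} (hη : 0 < η) :
    ∫ x : ℝ, ‖CT f (x + η * Complex.I)‖ * (1 + x ^ 2)⁻¹ ≤ 800 * lam := by
  have main : ∀ L : ℂ → ℝ, Continuous L → (∀ z, |L z| ≤ ‖z‖) →
      Integrable (fun t => (((max (L (f t) / lam) 0 : ℝ)) : ℂ)) ∧
      ∫ x : ℝ, ‖CT (fun t => ((max (L (f t) / lam) 0 : ℝ) : ℂ)) (x + η * Complex.I)‖ * (1 + x ^ 2)⁻¹ ≤ 200 := by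
    intro L hL hLb
    have hle : ∀ t, max (L (f t) / lam) 0 ≤ ‖f t‖ / lam := by
      intro t
      apply max_le _ (by positivity)
      gcongr
      exact (le_abs_self _).trans (hLb _)
    have hm : AEStronglyMeasurable (fun t => max (L (f t) / lam) 0) := by
      exact (Continuous.comp_aestronglyMeasurable (g := fun z => max (L z / lam) 0) (by fun_prop)
        hf.aestronglyMeasurable)
    have hi : Integrable (fun t => max (L (f t) / lam) 0) := by
      refine (hf.norm.div_const lam).mono' hm (Eventually.of_forall fun t => ?_)
      rw [Real.norm_of_nonneg (le_max_right _ _)]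
      exact hle t
    have hpi : Integrable (fun t => psi (max (L (f t) / lam) 0)) := by
      refine hp.mono' (psi_measurable.comp_aemeasurable hm.aemeasurable).aestronglyMeasurable
        (Eventually.of_forall fun t => ?_)
      rw [Real.norm_of_nonneg (psi_nonneg (le_max_right _ _))]
      exact psi_mono (le_max_right _ _) (hle t)
    refine ⟨hi.ofReal, key_real (fun t => le_max_right _ _) hi hpi ?_ hη⟩
    exact (integral_mono hpi hp fun t => psi_mono (le_max_right _ _) (hle t)).trans hp1
  obtain ⟨i1, b1⟩ := main Complex.re Complex.continuous_re Complex.abs_re_le_norm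
  obtain ⟨i2, b2⟩ := main (fun z => - z.re) Complex.continuous_re.neg
    (fun z => by rw [abs_neg]; exact Complex.abs_re_le_norm z)
  obtain ⟨i3, b3⟩ := main Complex.im Complex.continuous_im Complex.abs_im_le_norm
  obtain ⟨i4, b4⟩ := main (fun z => - z.im) Complex.continuous_im.neg
    (fun z => by rw [abs_neg]; exact Complex.abs_im_le_norm z)
  set h1 : ℝ → ℂ := fun t => (((max ((f t).re / lam) 0 : ℝ)) : ℂ) with hh1
  set h2 : ℝ → ℂ := fun t => (((max (-(f t).re / lam) 0 : ℝ)) : ℂ) with hh2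
  set h3 : ℝ → ℂ := fun t => (((max ((f t).im / lam) 0 : ℝ)) : ℂ) with hh3
  set h4 : ℝ → ℂ := fun t => (((max (-(f t).im / lam) 0 : ℝ)) : ℂ) with hh4
  have hmax : ∀ a : ℝ, max (a / lam) 0 - max (-a / lam) 0 = a / lam := by
    intro a
    rw [neg_div]
    exact max_zero_sub_max_neg_zero_eq_self (a / lam)
  have hdec : f = fun t => (lam : ℂ) * ((h1 t - h2 t) + Complex.I * (h3 t - h4 t)) := by
    ext t
    simp only [hh1, hh2, hh3, hh4]
    rw [← Complex.ofReal_sub, ← Complex.ofReal_sub, hmax, hmax]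
    push_cast
    have : (lam : ℂ) ≠ 0 := by exact_mod_cast hl.ne'
    field_simp
    rw [mul_comm]
    rw [mul_comm]
    rw [mul_comm Complex.I]
    exact (Complex.re_add_im (f t)).symm
  have hCT : ∀ x : ℝ, CT f (x + η * Complex.I) = lam * ((CT h1 (x + η * Complex.I) - CT h2 (x + η * Complex.I)) +
      Complex.I * (CT h3 (x + η * Complex.I) - CT h4 (x + η * Complex.I))) := by
    intro x
    have hz : 0 < ((x : ℂ) + η * Complex.I).im := by simpa using hη
    conv_lhs => rw [hdec]
    have k1 : Integrable (fun t => h1 t - h2 t) := i1.sub i2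
    have k2 : Integrable (fun t => Complex.I * (h3 t - h4 t)) := (i3.sub i4).const_mul _
    rw [ct_mul, ct_add k1 k2 hz, ct_mul, ct_sub i1 i2 hz, ct_sub i3 i4 hz]
  have j1 := ct_w_integrable_norm i1 hη
  have j2 := ct_w_integrable_norm i2 hη
  have j3 := ct_w_integrable_norm i3 hη
  have j4 := ct_w_integrable_norm i4 hη
  have hb : ∀ x : ℝ, ‖CT f (x + η * Complex.I)‖ * (1 + x ^ 2)⁻¹ ≤ lam *
     ((‖CT h1 (x + η * Complex.I)‖ * (1 + x ^ 2)⁻¹ + ‖CT h2 (x + η * Complex.I)‖ * (1 + x ^ 2)⁻¹) +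
     (‖CT h3 (x + η * Complex.I)‖ * (1 + x ^ 2)⁻¹ + ‖CT h4 (x + η * Complex.I)‖ * (1 + x ^ 2)⁻¹)) := by
    intro x
    rw [hCT, norm_mul, Complex.norm_real, Real.norm_of_nonneg hl.le, ← add_mul, ← add_mul, ← add_mul, ← mul_assoc]
    gcongr
    refine (norm_add_le _ _).trans ?_
    rw [norm_mul, Complex.norm_I, one_mul]
    exact add_le_add (norm_sub_le _ _) (norm_sub_le _ _)
  refine (integral_mono (ct_w_integrable_norm hf hη) (((j1.add j2).add (j3.add j4)).const_mul lam) hb).trans ?_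
  have e : ∀ a b c d : ℝ → ℝ, Integrable a → Integrable b → Integrable c → Integrable d →
    ∫ x, lam * ((a + b) + (c + d)) x = lam * (((∫ x, a x) + ∫ x, b x) + ((∫ x, c x) + ∫ x, d x)) := by
    intro a b c d ha hb hc hd
    rw [integral_const_mul, integral_add' (ha.add hb) (hc.add hd), integral_add' ha hb, integral_add' hc hd]
  rw [e _ _ _ _ j1 j2 j3 j4]
  nlinarith

lemma dyadic_ker (u : ℝ) {y : ℝ} (hy : 0 < y) :
    ∃ k : ℕ, |u| ≤ 2 ^ k * y ∧ y / (u ^ 2 + y ^ 2) ≤ 4 * (1 / 4) ^ k / y := by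
  rcases le_or_gt |u| y with h | h
  · refine ⟨0, by simpa using h, ?_⟩
    rw [div_le_div_iff₀ (by positivity) hy]
    nlinarith [sq_nonneg u, sq_nonneg y]
  · obtain ⟨n, h1, h2⟩ := exists_nat_pow_near (x := |u| / y) (y := (2 : ℝ)) (by rw [le_div_iff₀ hy]; linarith) (by norm_num)
    refine ⟨n + 1, by rw [div_lt_iff₀ hy] at h2; exact h2.le, ?_⟩
    rw [le_div_iff₀ hy] at h1
    have h3 : (4 : ℝ) ^ n * y ^ 2 ≤ u ^ 2 := by
      have := pow_le_pow_left₀ (by positivity) h1 2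
      rw [sq_abs] at this
      calc (4 : ℝ) ^ n * y ^ 2 = (2 ^ n * y) ^ 2 := by
            rw [mul_pow, ← pow_mul, mul_comm n 2, pow_mul]; norm_num
        _ ≤ _ := this
    have h4 : (0 : ℝ) < 4 ^ n := by positivity
    have h5 : 4 * (1 / 4 : ℝ) ^ (n + 1) = (4 ^ n)⁻¹ := by
      rw [pow_succ, one_div, inv_pow]; field_simp
    rw [h5, div_le_div_iff₀ (by positivity) hy, inv_mul_eq_div, le_div_iff₀ h4]
    nlinarith [sq_nonneg y]

lemma dyadic_bound {h : ℝ → ENNReal} (hm : AEMeasurable h) {D : ENNReal} (x : ℝ)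
    (hD : ∀ r : ℝ, 0 < r → ∫⁻ t in Metric.closedBall x r, h t ≤ D * ENNReal.ofReal r) {y : ℝ} (hy : 0 < y) :
    ∫⁻ t, ENNReal.ofReal (y / ((t - x) ^ 2 + y ^ 2)) * h t ≤ 8 * D := by
  have h1 : ∀ t, ENNReal.ofReal (y / ((t - x) ^ 2 + y ^ 2)) * h t ≤
      ∑' k : ℕ, ENNReal.ofReal (4 * (1 / 4) ^ k / y) * (Metric.closedBall x (2 ^ k * y)).indicator h t := by
    intro t
    obtain ⟨k, hk1, hk2⟩ := dyadic_ker (t - x) hy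
    refine le_trans ?_ (ENNReal.le_tsum k)
    rw [indicator_of_mem (by rw [Metric.mem_closedBall, Real.dist_eq]; exact hk1)]
    gcongr
  refine (lintegral_mono h1).trans ?_
  rw [lintegral_tsum (fun k => (hm.indicator measurableSet_closedBall).const_mul _)]
  have h2 : ∀ k : ℕ, ∫⁻ t, ENNReal.ofReal (4 * (1 / 4) ^ k / y) * (Metric.closedBall x (2 ^ k * y)).indicator h t
      ≤ ENNReal.ofReal (4 * (1 / 2) ^ k) * D := by
    intro k
    rw [lintegral_const_mul'' _ (hm.indicator measurableSet_closedBall), lintegral_indicator measurableSet_closedBall]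
    calc _ ≤ ENNReal.ofReal (4 * (1 / 4) ^ k / y) * (D * ENNReal.ofReal (2 ^ k * y)) := by
          gcongr; exact hD _ (by positivity)
      _ = ENNReal.ofReal (4 * (1 / 4) ^ k / y) * ENNReal.ofReal (2 ^ k * y) * D := by ring
      _ = _ := by
          rw [← ENNReal.ofReal_mul (by positivity)]
          congr 2
          have : (1 / 2 : ℝ) ^ k = (1 / 4) ^ k * 2 ^ k := by rw [← mul_pow]; norm_num
          rw [this]; field_simp
  refine (ENNReal.tsum_le_tsum h2).trans ?_
  rw [ENNReal.tsum_mul_right, ← ENNReal.ofReal_tsum_of_nonneg (fun k => by positivity) (summable_geometric_two.mul_left 4),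
    tsum_mul_left, tsum_geometric_two]
  norm_num

lemma locInt_of_w {g : ℝ → ℂ} (hgm : AEStronglyMeasurable g)
    (hg : Integrable fun t => ‖g t‖ * (1 + t ^ 2)⁻¹) : LocallyIntegrable g := by
  rw [locallyIntegrable_iff]
  intro K hK
  obtain ⟨R, hR⟩ := hK.isBounded.subset_closedBall 0
  refine IntegrableOn.mono_set ?_ hR
  refine (hg.integrableOn.const_mul (1 + R ^ 2)).mono' hgm.restrict ?_
  refine (ae_restrict_iff' measurableSet_closedBall).2 (Eventually.of_forall fun t ht => ?_)
  rw [Metric.mem_closedBall, dist_zero_right, Real.norm_eq_abs] at ht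
  have : t ^ 2 ≤ R ^ 2 := by rw [← sq_abs]; exact pow_le_pow_left₀ (abs_nonneg _) ht 2
  rw [← div_eq_mul_inv, mul_div_assoc', le_div_iff₀ (by positivity), mul_comm]
  gcongr

lemma leb_poisson {g : ℝ → ℂ} (hgm : AEStronglyMeasurable g)
    (hg : Integrable fun t => ‖g t‖ * (1 + t ^ 2)⁻¹) :
    ∀ᵐ x : ℝ, Tendsto (fun y : ℝ => ∫⁻ t, ENNReal.ofReal (y / ((t - x) ^ 2 + y ^ 2)) * ‖g t - g x‖ₑ)
      (nhdsWithin 0 (Ioi 0)) (nhds 0) := by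
  filter_upwards [(Besicovitch.vitaliFamily (volume : Measure ℝ)).ae_tendsto_lintegral_enorm_sub_div (locInt_of_w hgm hg)] with x hx
  have hx' := hx.comp (Besicovitch.tendsto_filterAt (volume : Measure ℝ) x)
  rw [ENNReal.tendsto_nhds_zero] at hx' ⊢
  have hsub : AEMeasurable (fun t => ‖g t - g x‖ₑ) := (hgm.sub aestronglyMeasurable_const).enorm
  intro ε hε
  rcases eq_or_ne ε ⊤ with rfl | hεt
  · simp
  set δ : ENNReal := ε / 32 with hδ
  have hδ0 : 0 < δ := ENNReal.div_pos hε.ne' (by norm_num)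
  have h1 := hx' δ hδ0
  rw [eventually_nhdsWithin_iff, Metric.eventually_nhds_iff] at h1
  obtain ⟨r1, hr1, h1⟩ := h1
  set r0 := r1 / 2 with hr0d
  have hr0 : 0 < r0 := by positivity
  have h2 : ∀ r, 0 < r → r ≤ r0 → ∫⁻ t in Metric.closedBall x r, ‖g t - g x‖ₑ ≤ 2 * δ * ENNReal.ofReal r := by
    intro r hr hr'
    have := h1 (y := r) (by rw [Real.dist_eq, sub_zero, abs_of_pos hr]; linarith) hr
    simp only [Function.comp] at this
    rw [ENNReal.div_le_iff (by rw [Real.volume_closedBall]; simpa using hr) (by rw [Real.volume_closedBall]; exact ENNReal.ofReal_ne_top),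
      Real.volume_closedBall, ENNReal.ofReal_mul (by norm_num)] at this
    refine this.trans (le_of_eq ?_)
    simp; ring
  set h : ℝ → ENNReal := (Metric.closedBall x r0).indicator (fun t => ‖g t - g x‖ₑ) with hh
  have hhm : AEMeasurable h := hsub.indicator measurableSet_closedBall
  have hD : ∀ r : ℝ, 0 < r → ∫⁻ t in Metric.closedBall x r, h t ≤ 2 * δ * ENNReal.ofReal r := by
    intro r hr
    rcases le_total r r0 with hrr | hrr
    · exact (lintegral_mono (indicator_le_self _ _)).trans (h2 r hr hrr)
    · calc _ ≤ ∫⁻ t, h t := setLIntegral_le_lintegral _ _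
        _ = ∫⁻ t in Metric.closedBall x r0, ‖g t - g x‖ₑ := lintegral_indicator measurableSet_closedBall _
        _ ≤ _ := h2 r0 hr0 le_rfl
        _ ≤ _ := by gcongr
  have hnear : ∀ y, 0 < y → ∫⁻ t, ENNReal.ofReal (y / ((t - x) ^ 2 + y ^ 2)) * h t ≤ ε / 2 := by
    intro y hy
    refine (dyadic_bound hhm x hD hy).trans (le_of_eq ?_)
    rw [hδ, ← mul_assoc, ← mul_div_assoc, mul_comm, ]
    norm_num
    rw [mul_div_assoc, div_eq_mul_inv ε]
    congr 1
    rw [ENNReal.div_eq_inv_mul, show (32 : ENNReal) = 2 * 16 by norm_num, ENNReal.mul_inv (by norm_num) (by norm_num), mul_assoc,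
      ENNReal.inv_mul_cancel (by norm_num) (by norm_num), mul_one]
  -- far part
  set K : ℝ := 2 + (1 + 2 * x ^ 2) / r0 ^ 2 with hK
  set B : ENNReal := ∫⁻ t, ENNReal.ofReal (1 + t ^ 2)⁻¹ * ‖g t - g x‖ₑ with hB
  have hBt : B ≠ ⊤ := by
    have hi : Integrable (fun t => ((1 + t ^ 2)⁻¹ : ℝ) • (g t - g x)) := by
      have i1 : Integrable (fun t => ((1 + t ^ 2)⁻¹ : ℝ) • g t) := by
        refine hg.mono' ?_ (Eventually.of_forall fun t => ?_)
        · exact (by fun_prop : Measurable fun t : ℝ => (1 + t ^ 2)⁻¹).aestronglyMeasurable.smul hgm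
        · rw [norm_smul, Real.norm_of_nonneg (by positivity), mul_comm]
      have i2 : Integrable (fun t : ℝ => ((1 + t ^ 2)⁻¹ : ℝ) • g x) := integrable_inv_one_add_sq.smul_const (g x)
      simp_rw [smul_sub]
      exact i1.sub i2
    have := hi.2
    rw [HasFiniteIntegral] at this
    refine ne_of_lt (lt_of_eq_of_lt ?_ this)
    refine lintegral_congr fun t => ?_
    rw [enorm_smul, Real.enorm_of_nonneg (by positivity)]
  have hfar : ∀ y, 0 < y → ∀ t, ENNReal.ofReal (y / ((t - x) ^ 2 + y ^ 2)) * ‖g t - g x‖ₑ ≤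
      ENNReal.ofReal (y / ((t - x) ^ 2 + y ^ 2)) * h t + ENNReal.ofReal (K * y) * (ENNReal.ofReal (1 + t ^ 2)⁻¹ * ‖g t - g x‖ₑ) := by
    intro y hy t
    by_cases ht : t ∈ Metric.closedBall x r0
    · rw [hh, indicator_of_mem ht]; exact le_self_add
    · refine le_trans ?_ le_add_self
      rw [← mul_assoc, ← ENNReal.ofReal_mul (by positivity)]
      gcongr
      rw [Metric.mem_closedBall, Real.dist_eq, not_le] at ht
      have h3 : r0 ^ 2 ≤ (t - x) ^ 2 := by rw [← sq_abs (t - x)]; exact pow_le_pow_left₀ hr0.le ht.le 2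
      have h4 : 1 + t ^ 2 ≤ K * (t - x) ^ 2 := by
        have : (1 + 2 * x ^ 2) ≤ (1 + 2 * x ^ 2) / r0 ^ 2 * (t - x) ^ 2 := by
          rw [div_mul_eq_mul_div, le_div_iff₀ (by positivity)]; gcongr
        rw [hK]; nlinarith [sq_nonneg (t - 2 * x)]
      rw [← div_eq_mul_inv, div_le_div_iff₀ (by positivity) (by positivity)]
      have hK0 : 0 < K := by positivity
      nlinarith [mul_le_mul_of_nonneg_left h4 hy.le, mul_pos hK0 hy, mul_pos (mul_pos hK0 hy) (pow_pos hy 2)]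
  have hlim : Tendsto (fun y : ℝ => ENNReal.ofReal (K * y) * B) (nhdsWithin 0 (Ioi 0)) (nhds 0) := by
    have : Tendsto (fun y : ℝ => ENNReal.ofReal (K * y) * B) (nhds 0) (nhds (ENNReal.ofReal (K * 0) * B)) := by
      refine ENNReal.Tendsto.mul_const ?_ (Or.inr hBt)
      exact ENNReal.tendsto_ofReal ((continuous_const.mul continuous_id).tendsto 0)
    simp only [mul_zero, ENNReal.ofReal_zero, zero_mul] at this
    exact this.mono_left nhdsWithin_le_nhds
  rw [ENNReal.tendsto_nhds_zero] at hlim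
  filter_upwards [hlim (ε / 2) (ENNReal.half_pos hε.ne'), self_mem_nhdsWithin] with y hy1 hy
  refine (lintegral_mono (hfar y hy)).trans ?_
  have hkm : Measurable (fun t : ℝ => ENNReal.ofReal (y / ((t - x) ^ 2 + y ^ 2))) := by fun_prop
  have hkh : AEMeasurable (fun t : ℝ => ENNReal.ofReal (y / ((t - x) ^ 2 + y ^ 2)) * h t) := hkm.aemeasurable.mul hhm
  rw [lintegral_add_left' hkh, lintegral_const_mul' _ _ (by simp)]
  calc _ ≤ ε / 2 + ε / 2 := add_le_add (hnear y hy) hy1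
    _ = ε := ENNReal.add_halves ε

lemma kerP_integrable {y : ℝ} (hy : 0 < y) : Integrable (fun u : ℝ => y / (u ^ 2 + y ^ 2)) := by
  have := (ker_integrable 0 hy).const_mul y
  simpa [div_eq_mul_inv] using this

lemma kerP_integral {y : ℝ} (hy : 0 < y) : ∫ u : ℝ, y / (u ^ 2 + y ^ 2) = Real.pi := by
  have := ker_integral 0 hy
  simp only [sub_zero] at this
  simp_rw [div_eq_mul_inv]
  rw [integral_const_mul, this]
  field_simp

lemma approx_id {g : ℝ → ℂ} (hgm : AEStronglyMeasurable g)
    (hg : Integrable fun t => ‖g t‖ * (1 + t ^ 2)⁻¹) (k : ℝ → ℝ → ℂ) (c : ℂ)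
    (hkm : ∀ y, 0 < y → Measurable (k y)) (hkb : ∀ y, 0 < y → ∀ u, ‖k y u‖ ≤ 2 * (y / (u ^ 2 + y ^ 2)))
    (hkc : ∀ y, 0 < y → ∫ u, k y u = c) :
    ∀ᵐ x : ℝ, Tendsto (fun y : ℝ => ∫ t, g t * k y (t - x)) (nhdsWithin 0 (Ioi 0)) (nhds (c * g x)) := by
  filter_upwards [leb_poisson hgm hg] with x hx
  have h2 : Tendsto (fun y : ℝ => 2 * ∫⁻ t, ENNReal.ofReal (y / ((t - x) ^ 2 + y ^ 2)) * ‖g t - g x‖ₑ)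
      (nhdsWithin 0 (Ioi 0)) (nhds 0) := by
    have := ENNReal.Tendsto.const_mul (a := 2) hx (Or.inr (by norm_num))
    simpa using this
  have h3 := (ENNReal.tendsto_toReal ENNReal.zero_ne_top).comp h2
  rw [tendsto_iff_norm_sub_tendsto_zero]
  refine squeeze_zero' (Eventually.of_forall fun y => norm_nonneg _) ?_ (by simpa using h3)
  filter_upwards [h2.eventually (gt_mem_nhds ENNReal.zero_lt_top), self_mem_nhdsWithin] with y hy1 hy
  have hy : 0 < y := hy
  have hki : Integrable (k y) := ((kerP_integrable hy).const_mul 2).mono' (hkm y hy).aestronglyMeasurable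
    (Eventually.of_forall (hkb y hy))
  have hkx : Integrable (fun t => k y (t - x)) := hki.comp_sub_right x
  have hle : ∫⁻ t, ‖(g t - g x) * k y (t - x)‖ₑ ≤ 2 * ∫⁻ t, ENNReal.ofReal (y / ((t - x) ^ 2 + y ^ 2)) * ‖g t - g x‖ₑ := by
    rw [← lintegral_const_mul' _ _ (by norm_num)]
    refine lintegral_mono fun t => ?_
    rw [enorm_mul, mul_comm, ← mul_assoc]
    gcongr
    rw [← ofReal_norm, show (2 : ENNReal) = ENNReal.ofReal 2 by simp, ← ENNReal.ofReal_mul (by norm_num)]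
    exact ENNReal.ofReal_le_ofReal (hkb y hy _)
  have hi1 : Integrable (fun t => (g t - g x) * k y (t - x)) :=
    ⟨(hgm.sub aestronglyMeasurable_const).mul hkx.aestronglyMeasurable, hle.trans_lt hy1⟩
  have hi2 : Integrable (fun t => g x * k y (t - x)) := hkx.const_mul _
  have e1 : ∫ t, g t * k y (t - x) = (∫ t, (g t - g x) * k y (t - x)) + ∫ t, g x * k y (t - x) := by
    rw [← integral_add hi1 hi2]
    congr 1; ext t; ring
  have e2 : ∫ t, g x * k y (t - x) = c * g x := by
    rw [integral_const_mul, integral_sub_right_eq_self (k y) x, hkc y hy, mul_comm]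
  rw [e1, e2, add_sub_cancel_right]
  simp only [Function.comp]
  calc _ ≤ (∫⁻ t, ENNReal.ofReal ‖(g t - g x) * k y (t - x)‖).toReal := norm_integral_le_lintegral_norm _
    _ ≤ _ := by
      refine ENNReal.toReal_mono hy1.ne ?_
      simp_rw [ofReal_norm]
      exact hle

lemma poisson_ae {g : ℝ → ℂ} (hgm : AEStronglyMeasurable g)
    (hg : Integrable fun t => ‖g t‖ * (1 + t ^ 2)⁻¹) :
    ∀ᵐ x : ℝ, Tendsto (fun y : ℝ => ∫ t, g t * (((y / Real.pi) * ((t - x) ^ 2 + y ^ 2)⁻¹ : ℝ) : ℂ))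
      (nhdsWithin 0 (Ioi 0)) (nhds (g x)) := by
  have := approx_id hgm hg (fun y u => (((y / Real.pi) * (u ^ 2 + y ^ 2)⁻¹ : ℝ) : ℂ)) 1 ?_ ?_ ?_
  · simpa using this
  · intro y _; fun_prop
  · intro y hy u
    rw [Complex.norm_real, Real.norm_of_nonneg (by positivity), div_mul_eq_mul_div, ← div_eq_mul_inv]
    have : 0 ≤ y / (u ^ 2 + y ^ 2) := by positivity
    rw [div_le_iff₀ Real.pi_pos]
    nlinarith [Real.pi_gt_three]
  · intro y hy
    rw [integral_complex_ofReal]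
    have : ∀ u : ℝ, (y / Real.pi) * (u ^ 2 + y ^ 2)⁻¹ = Real.pi⁻¹ * (y / (u ^ 2 + y ^ 2)) := by intro u; ring
    simp_rw [this]
    rw [integral_const_mul, kerP_integral hy, inv_mul_cancel₀ Real.pi_ne_zero]; simp

def oddK (y u : ℝ) : ℝ := u / (u ^ 2 + y ^ 2) - (if y ≤ |u| then u⁻¹ else 0)

lemma oddK_bound {y : ℝ} (hy : 0 < y) (u : ℝ) : |oddK y u| ≤ y / (u ^ 2 + y ^ 2) := by
  unfold oddK
  split_ifs with h
  · have hu : 0 < |u| := hy.trans_le h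
    have hu0 : u ≠ 0 := abs_pos.mp hu
    have : u / (u ^ 2 + y ^ 2) - u⁻¹ = - (y ^ 2 / (u * (u ^ 2 + y ^ 2))) := by
      field_simp; ring
    rw [this, abs_neg, abs_div, abs_mul, abs_of_pos (by positivity : 0 < u ^ 2 + y ^ 2), abs_of_pos (by positivity : 0 < y ^ 2),
      div_le_div_iff₀ (by positivity) (by positivity)]
    have : 0 < (u ^ 2 + y ^ 2) * y := by positivity
    nlinarith
  · push Not at h
    rw [sub_zero, abs_div, abs_of_pos (by positivity : 0 < u ^ 2 + y ^ 2)]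
    gcongr

lemma oddK_meas (y : ℝ) : Measurable (oddK y) := by
  unfold oddK
  refine Measurable.sub (by fun_prop) (Measurable.ite ?_ (by fun_prop) measurable_const)
  exact measurableSet_le measurable_const (by fun_prop)

lemma oddK_integral (y : ℝ) : ∫ u, oddK y u = 0 := by
  have h1 := integral_neg_eq_self (oddK y) volume
  have h2 : ∀ u, oddK y (-u) = - oddK y u := by
    intro u
    unfold oddK
    rw [abs_neg]
    split_ifs
    · rw [neg_sq, neg_div, inv_neg]; ring
    · rw [neg_sq, neg_div]; ring
  simp_rw [h2] at h1
  rw [integral_neg] at h1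
  linarith

lemma ct_trunc {f : ℝ → ℂ} (hf : Integrable f) :
    ∀ᵐ x : ℝ, Tendsto (fun y : ℝ => CT f (x + y * Complex.I) -
        (Real.pi : ℂ)⁻¹ * ∫ t in {t : ℝ | y ≤ |t - x|}, f t / ((t : ℂ) - x))
      (nhdsWithin 0 (Ioi 0)) (nhds (Complex.I * f x)) := by
  have hfw : Integrable fun t => ‖f t‖ * (1 + t ^ 2)⁻¹ := by
    refine hf.norm.mono' (hf.norm.aestronglyMeasurable.mul (by fun_prop : Measurable fun t : ℝ => (1 + t ^ 2)⁻¹).aestronglyMeasurable)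
      (Eventually.of_forall fun t => ?_)
    rw [Real.norm_of_nonneg (by positivity)]
    exact mul_le_of_le_one_right (norm_nonneg _) (inv_le_one_of_one_le₀ (by nlinarith [sq_nonneg t]))
  have := approx_id hf.aestronglyMeasurable hfw
    (fun y u => (Real.pi : ℂ)⁻¹ * ((oddK y u : ℂ) + Complex.I * ((y / (u ^ 2 + y ^ 2) : ℝ) : ℂ))) Complex.I ?_ ?_ ?_
  · filter_upwards [this] with x hx
    refine hx.congr' ?_
    filter_upwards [self_mem_nhdsWithin] with y hy
    have hy : 0 < y := hy
    have hms : MeasurableSet {t : ℝ | y ≤ |t - x|} := measurableSet_le measurable_const (by fun_prop)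
    have hz : 0 < ((x : ℂ) + y * Complex.I).im := by simpa using hy
    have hi2 : IntegrableOn (fun t : ℝ => f t / ((t : ℂ) - x)) {t : ℝ | y ≤ |t - x|} := by
      refine (hf.norm.integrableOn.mul_const y⁻¹).mono' ?_ ?_
      · simp_rw [div_eq_mul_inv]
        exact (hf.aestronglyMeasurable.mul (by fun_prop : Measurable fun t : ℝ => ((t : ℂ) - x)⁻¹).aestronglyMeasurable).restrict
      · refine (ae_restrict_iff' hms).2 (Eventually.of_forall fun t ht => ?_)
        rw [norm_div, div_eq_mul_inv, ← Complex.ofReal_sub, Complex.norm_real]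
        gcongr
        exact ht
    unfold CT
    rw [← mul_sub, ← integral_indicator hms, ← integral_sub (ct_integrable hf hz) ((integrable_indicator_iff hms).2 hi2),
      ← integral_const_mul]
    congr 1; ext t
    have hne : ((t : ℂ) - (x + y * Complex.I)) ≠ 0 := by
      intro h
      have := congrArg Complex.im h
      simp at this; exact hy.ne' this
    have hne2 : (((t - x) ^ 2 + y ^ 2 : ℝ) : ℂ) ≠ 0 := by
      rw [Complex.ofReal_ne_zero]; positivity
    have key : f t / ((t : ℂ) - (x + y * Complex.I)) =
        f t * ((((t - x) / ((t - x) ^ 2 + y ^ 2) : ℝ) : ℂ) + Complex.I * ((y / ((t - x) ^ 2 + y ^ 2) : ℝ) : ℂ)) := by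
      rw [div_eq_iff hne]
      push_cast at hne2 ⊢
      field_simp
      ring_nf
      rw [Complex.I_sq]; ring
    rw [key]
    unfold oddK
    by_cases h : y ≤ |t - x|
    · rw [indicator_of_mem (show t ∈ {t : ℝ | y ≤ |t - x|} from h), if_pos h]
      push_cast
      ring
    · rw [indicator_of_notMem (show t ∉ {t : ℝ | y ≤ |t - x|} from h), if_neg h]
      push_cast
      ring
  · intro y _
    have := oddK_meas y
    fun_prop
  · intro y hy u
    rw [norm_mul, norm_inv, Complex.norm_real, Real.norm_of_nonneg Real.pi_pos.le]
    have h1 : ‖((oddK y u : ℂ) + Complex.I * ((y / (u ^ 2 + y ^ 2) : ℝ) : ℂ))‖ ≤ 2 * (y / (u ^ 2 + y ^ 2)) := by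
      refine (norm_add_le _ _).trans ?_
      rw [norm_mul, Complex.norm_I, Complex.norm_real, Complex.norm_real, Real.norm_eq_abs, Real.norm_of_nonneg (by positivity)]
      linarith [oddK_bound hy u]
    refine (mul_le_of_le_one_left (norm_nonneg _) (inv_le_one_of_one_le₀ (by linarith [Real.pi_gt_three]))).trans h1
  · intro y hy
    have i1 : Integrable (fun u => (oddK y u : ℂ)) := by
      refine Integrable.ofReal ?_
      exact (kerP_integrable hy).mono' (oddK_meas y).aestronglyMeasurable (Eventually.of_forall (oddK_bound hy))
    have i2 : Integrable (fun u => ((y / (u ^ 2 + y ^ 2) : ℝ) : ℂ)) := (kerP_integrable hy).ofReal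
    rw [integral_const_mul, integral_add i1 (i2.const_mul _), integral_const_mul, integral_complex_ofReal, integral_complex_ofReal,
      oddK_integral, kerP_integral hy]
    have : (Real.pi : ℂ) ≠ 0 := by simp [Real.pi_ne_zero]
    simp
    field_simp

def PO (s : ℝ) (f : ℝ → ℂ) (x : ℝ) : ℂ := ∫ t, f t * (((s / Real.pi) * ((t - x) ^ 2 + s ^ 2)⁻¹ : ℝ) : ℂ)

lemma po_prod {f : ℝ → ℂ} (hf : Integrable f) {s : ℝ} (hs : 0 < s) :
    Integrable (fun p : ℝ × ℝ => f p.2 * (((s / Real.pi) * ((p.2 - p.1) ^ 2 + s ^ 2)⁻¹ : ℝ) : ℂ)) (volume.prod volume) := by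
  have hk : Integrable (fun u : ℝ => (((s / Real.pi) * (u ^ 2 + s ^ 2)⁻¹ : ℝ) : ℂ)) := by
    have := ((ker_integrable 0 hs).const_mul (s / Real.pi)).ofReal (𝕜 := ℂ)
    simpa using this
  have := hf.convolution_integrand (ContinuousLinearMap.mul ℂ ℂ) hk
  refine this.congr (Eventually.of_forall fun p => ?_)
  simp only [ContinuousLinearMap.mul_apply']
  rw [← neg_sub p.2 p.1, neg_sq]

lemma po_integrable {f : ℝ → ℂ} (hf : Integrable f) {s : ℝ} (hs : 0 < s) : Integrable (PO s f) :=
  (po_prod hf hs).integral_prod_left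

lemma ker_cauchy (t : ℝ) {s : ℝ} (hs : 0 < s) {z : ℂ} (hz : 0 < z.im) :
    ∫ u : ℝ, (((s / Real.pi) * ((t - u) ^ 2 + s ^ 2)⁻¹ : ℝ) : ℂ) / ((u : ℂ) - z) = 1 / ((t : ℂ) - (z + s * Complex.I)) := by
  set c : ℂ := (starRingEnd ℂ) z with hc
  have hcim : c.im = - z.im := Complex.conj_im z
  have hne : ∀ ζ : ℂ, -z.im < ζ.im → ζ - c ≠ 0 := by
    intro ζ hζ h
    have := congrArg Complex.im h
    rw [Complex.sub_im, hcim] at this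
    simp at this; linarith
  have := poisson_formula (fun ζ => (ζ - c)⁻¹) (z.im⁻¹) z.im hz ?_ ?_ t s hs
  · have h2 := congrArg (starRingEnd ℂ) this
    rw [← integral_conj] at h2
    simp only [map_mul, map_inv₀, map_sub, map_add, Complex.conj_ofReal, Complex.conj_I, hc, Complex.conj_conj] at h2
    have h3 : ∀ u : ℝ, (((s / Real.pi) * ((t - u) ^ 2 + s ^ 2)⁻¹ : ℝ) : ℂ) / ((u : ℂ) - z) =
        ((s / Real.pi : ℝ) : ℂ) * (((u : ℂ) - z)⁻¹ * ((((u - t) ^ 2 + s ^ 2)⁻¹ : ℝ) : ℂ)) := by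
      intro u
      rw [show (t - u) ^ 2 = (u - t) ^ 2 by ring, Complex.ofReal_mul, div_eq_mul_inv]; ring
    simp_rw [h3]
    rw [integral_const_mul, h2, ← mul_assoc, ← Complex.ofReal_mul]
    rw [show s / Real.pi * (Real.pi / s) = 1 by field_simp, Complex.ofReal_one, one_mul, one_div]
    congr 1; ring
  · intro ζ hζ
    exact ((differentiableAt_id.sub_const c).inv (hne ζ hζ)).differentiableWithinAt
  · intro ζ hζ
    rw [norm_inv]
    gcongr
    have h4 := Complex.abs_im_le_norm (ζ - c)
    rw [Complex.sub_im, hcim, sub_neg_eq_add] at h4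
    linarith [le_abs_self (ζ.im + z.im)]

lemma ct_po {f : ℝ → ℂ} (hf : Integrable f) {s : ℝ} (hs : 0 < s) {z : ℂ} (hz : 0 < z.im) :
    CT (PO s f) z = CT f (z + s * Complex.I) := by
  have hp : Integrable (fun p : ℝ × ℝ => f p.2 * (((s / Real.pi) * ((p.2 - p.1) ^ 2 + s ^ 2)⁻¹ : ℝ) : ℂ) / ((p.1 : ℂ) - z))
      (volume.prod volume) := by
    simp_rw [div_eq_mul_inv _ ((_ : ℂ) - z)]
    refine (po_prod hf hs).mul_bdd (c := z.im⁻¹) ?_ (Eventually.of_forall fun p => ?_)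
    · exact (by fun_prop : Measurable fun p : ℝ × ℝ => ((p.1 : ℂ) - z)⁻¹).aestronglyMeasurable
    · rw [norm_inv]
      gcongr
      exact (le_abs_self _).trans (norm_sub_ge_im p.1 z)
  unfold CT PO
  congr 1
  simp_rw [← integral_div]
  rw [integral_integral_swap hp]
  congr 1; ext t
  simp_rw [mul_div_assoc]
  rw [integral_const_mul, ker_cauchy t hs hz]
  ring

def CC (f : ℝ → ℂ) : Prop := ∀ ε : ℝ, 0 < ε → ∃ η0 : ℝ, 0 < η0 ∧ ∀ η η' : ℝ, 0 < η → η < η0 → 0 < η' → η' < η0 →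
  ∫ x : ℝ, ‖CT f (x + η * Complex.I) - CT f (x + η' * Complex.I)‖ * (1 + x ^ 2)⁻¹ ≤ ε

lemma cc_int {f : ℝ → ℂ} (hf : Integrable f) {η η' : ℝ} (hη : 0 < η) (hη' : 0 < η') :
    Integrable fun x : ℝ => ‖CT f (x + η * Complex.I) - CT f (x + η' * Complex.I)‖ * (1 + x ^ 2)⁻¹ := by
  refine ((ct_w_integrable hf hη).sub (ct_w_integrable hf hη')).norm.congr (Eventually.of_forall fun x => ?_)
  simp only [Pi.sub_apply]
  rw [← sub_mul, norm_mul, Complex.norm_real, Real.norm_of_nonneg (by positivity)]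

lemma cc_approx {f : ℝ → ℂ} (hf : Integrable f)
    (h : ∀ ε : ℝ, 0 < ε → ∃ p : ℝ → ℂ, Integrable p ∧ CC p ∧ Integrable (fun t => psi (‖f t - p t‖ / ε)) ∧
      ∫ t, psi (‖f t - p t‖ / ε) ≤ 1) : CC f := by
  intro ε hε
  obtain ⟨p, hp, hcc, hi, h1⟩ := h (ε / 3200) (by positivity)
  obtain ⟨η0, hη0, hη⟩ := hcc (ε / 2) (by positivity)
  refine ⟨η0, hη0, fun η η' a b c d => ?_⟩
  have hfp : Integrable (fun t => f t - p t) := hf.sub hp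
  have k1 := key_complex hfp (by positivity) hi h1 a
  have k2 := key_complex hfp (by positivity) hi h1 c
  have k3 := hη η η' a b c d
  have j1 := ct_w_integrable_norm hfp a
  have j2 := ct_w_integrable_norm hfp c
  have j3 := cc_int hp a c
  have hb : ∀ x : ℝ, ‖CT f (x + η * Complex.I) - CT f (x + η' * Complex.I)‖ * (1 + x ^ 2)⁻¹ ≤
      (‖CT (fun t => f t - p t) (x + η * Complex.I)‖ * (1 + x ^ 2)⁻¹ +
      ‖CT (fun t => f t - p t) (x + η' * Complex.I)‖ * (1 + x ^ 2)⁻¹) +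
      ‖CT p (x + η * Complex.I) - CT p (x + η' * Complex.I)‖ * (1 + x ^ 2)⁻¹ := by
    intro x
    rw [← add_mul, ← add_mul]
    gcongr
    rw [ct_sub hf hp (by simpa using a), ct_sub hf hp (by simpa using c)]
    calc _ = ‖((CT f (x + η * Complex.I) - CT p (x + η * Complex.I)) - (CT f (x + η' * Complex.I) - CT p (x + η' * Complex.I)))
        + (CT p (x + η * Complex.I) - CT p (x + η' * Complex.I))‖ := by congr 1; ring
      _ ≤ _ := (norm_add_le _ _).trans (add_le_add_left (norm_sub_le _ _) _)
  refine (integral_mono (cc_int hf a c) ((j1.add j2).add j3) hb).trans ?_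
  rw [integral_add' (j1.add j2) j3, integral_add' j1 j2]
  linarith

lemma ct_lip {f : ℝ → ℂ} (hf : Integrable f) {s : ℝ} (hs : 0 < s) {z z' : ℂ} (hz : s ≤ z.im) (hz' : s ≤ z'.im) :
    ‖CT f z - CT f z'‖ ≤ Real.pi⁻¹ * (‖z - z'‖ * (s⁻¹ * s⁻¹) * ∫ t, ‖f t‖) := by
  unfold CT
  rw [← mul_sub, ← integral_sub (ct_integrable hf (hs.trans_le hz)) (ct_integrable hf (hs.trans_le hz')),
    norm_mul, norm_inv, Complex.norm_real, Real.norm_of_nonneg Real.pi_pos.le]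
  gcongr
  rw [← integral_const_mul]
  refine norm_integral_le_of_norm_le (hf.norm.const_mul _) (Eventually.of_forall fun t => ?_)
  have b1 : s ≤ ‖(t : ℂ) - z‖ := hz.trans ((le_abs_self _).trans (norm_sub_ge_im t z))
  have b2 : s ≤ ‖(t : ℂ) - z'‖ := hz'.trans ((le_abs_self _).trans (norm_sub_ge_im t z'))
  have n1 : (t : ℂ) - z ≠ 0 := norm_pos_iff.1 (hs.trans_le b1)
  have n2 : (t : ℂ) - z' ≠ 0 := norm_pos_iff.1 (hs.trans_le b2)
  have : f t / (t - z) - f t / (t - z') = (z - z') * ((t - z)⁻¹ * (t - z')⁻¹) * f t := by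
    field_simp; ring
  rw [this, norm_mul, norm_mul, norm_mul, norm_inv, norm_inv]
  gcongr

lemma cc_po {f : ℝ → ℂ} (hf : Integrable f) {s : ℝ} (hs : 0 < s) : CC (PO s f) := by
  intro ε hε
  set A := ∫ t, ‖f t‖ with hA
  have hA0 : 0 ≤ A := integral_nonneg fun t => norm_nonneg _
  set B := (s⁻¹ * s⁻¹) * A with hB
  have hB0 : 0 ≤ B := by positivity
  refine ⟨ε / (B + 1), by positivity, fun η η' a b c d => ?_⟩
  have hb : ∀ x : ℝ, ‖CT (PO s f) (x + η * Complex.I) - CT (PO s f) (x + η' * Complex.I)‖ * (1 + x ^ 2)⁻¹ ≤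
      Real.pi⁻¹ * (|η - η'| * B) * (1 + x ^ 2)⁻¹ := by
    intro x
    gcongr
    rw [ct_po hf hs (by simpa using a), ct_po hf hs (by simpa using c)]
    refine (ct_lip hf hs (by simp [a.le]) (by simp [c.le])).trans (le_of_eq ?_)
    rw [hB, ← hA]
    have : ((x : ℂ) + η * Complex.I + s * Complex.I) - (x + η' * Complex.I + s * Complex.I) = ((η - η' : ℝ) : ℂ) * Complex.I := by
      push_cast; ring
    rw [this, norm_mul, Complex.norm_I, Complex.norm_real, Real.norm_eq_abs]; ring
  refine (integral_mono (cc_int (po_integrable hf hs) a c) (integrable_inv_one_add_sq.const_mul _) hb).trans ?_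
  rw [integral_const_mul, integral_univ_inv_one_add_sq]
  have h1 : |η - η'| ≤ ε / (B + 1) := abs_le.2 ⟨by linarith, by linarith⟩
  have : Real.pi⁻¹ * (|η - η'| * B) * Real.pi = |η - η'| * B := by field_simp
  rw [this]
  calc |η - η'| * B ≤ ε / (B + 1) * (B + 1) := by gcongr; linarith
    _ = ε := by field_simp

lemma psi_dct {ι : Type*} {l : Filter ι} [l.IsCountablyGenerated] {F : ι → ℝ → ℂ} {G : ℝ → ℝ} {lam : ℝ} (hl : 0 < lam)
    (hm : ∀ᶠ i in l, AEStronglyMeasurable (F i)) (hG : Integrable fun t => psi (G t / lam))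
    (hb : ∀ᶠ i in l, ∀ t, ‖F i t‖ ≤ G t) (hlim : ∀ᵐ t, Tendsto (fun i => F i t) l (nhds 0)) :
    (∀ᶠ i in l, Integrable fun t => psi (‖F i t‖ / lam)) ∧
    ∀ᶠ i in l, ∫ t, psi (‖F i t‖ / lam) ≤ 1 := by
  have hbp : ∀ᶠ i in l, ∀ t, ‖psi (‖F i t‖ / lam)‖ ≤ psi (G t / lam) := by
    filter_upwards [hb] with i hi t
    rw [Real.norm_of_nonneg (psi_nonneg (by positivity))]
    apply psi_mono (by positivity)
    gcongr
    exact hi t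
  have hmp : ∀ᶠ i in l, AEStronglyMeasurable (fun t => psi (‖F i t‖ / lam)) := by
    filter_upwards [hm] with i hi
    exact (psi_measurable.comp_aemeasurable (hi.norm.aemeasurable.div_const lam)).aestronglyMeasurable
  constructor
  · filter_upwards [hbp, hmp] with i h1 h2
    exact hG.mono' h2 (Eventually.of_forall h1)
  · have := tendsto_integral_filter_of_dominated_convergence (f := fun _ => (0 : ℝ)) (fun t => psi (G t / lam)) hmp
      (hbp.mono fun i hi => Eventually.of_forall hi) hG ?_
    · simp only [integral_zero] at this
      exact this.eventually (ge_mem_nhds one_pos)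
    · filter_upwards [hlim] with t ht
      have h1 : Tendsto (fun i => ‖F i t‖ / lam) l (nhdsWithin 0 (Ici 0)) := by
        refine tendsto_nhdsWithin_iff.2 ⟨?_, Eventually.of_forall fun i => by simp only [mem_Ici]; positivity⟩
        have := ht.norm.div_const lam
        simpa using this
      have h2 := (psi_continuousOn 0 (by simp)).tendsto.comp h1
      have h3 : psi 0 = 0 := by simp [psi]
      rw [h3] at h2
      exact h2

lemma po_bound {f : ℝ → ℂ} {M : ℝ} (hM : 0 ≤ M) (hf : Integrable f) (hb : ∀ t, ‖f t‖ ≤ M)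
    (hs : ∀ t, t ∉ Ioo (-1 : ℝ) 1 → f t = 0) {s : ℝ} (h0 : 0 < s) (h1 : s ≤ 1) (x : ℝ) :
    ‖PO s f x‖ ≤ 5 * M * (1 + x ^ 2)⁻¹ := by
  rcases lt_or_ge (x ^ 2) 4 with hx | hx
  · have : ‖PO s f x‖ ≤ M := by
      have hi : Integrable (fun t => M * ((s / Real.pi) * ((t - x) ^ 2 + s ^ 2)⁻¹)) :=
        ((ker_integrable x h0).const_mul _).const_mul _
      refine (norm_integral_le_of_norm_le hi (Eventually.of_forall fun t => ?_)).trans (le_of_eq ?_)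
      · rw [norm_mul, Complex.norm_real, Real.norm_of_nonneg (by have := Real.pi_pos; positivity)]
        have := Real.pi_pos
        gcongr
        exact hb t
      · rw [integral_const_mul, integral_const_mul, ker_integral x h0]
        field_simp
    refine this.trans ?_
    rw [← div_eq_mul_inv, le_div_iff₀ (by positivity)]
    nlinarith
  · have hi : Integrable (fun t => (Ioo (-1 : ℝ) 1).indicator (fun _ => M * ((1 / Real.pi) * (5 * (1 + x ^ 2)⁻¹))) t) := by
      refine (integrable_indicator_iff measurableSet_Ioo).2 ?_
      exact integrableOn_const (by simp)
    refine (norm_integral_le_of_norm_le hi (Eventually.of_forall fun t => ?_)).trans ?_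
    · by_cases ht : t ∈ Ioo (-1 : ℝ) 1
      · rw [indicator_of_mem ht, norm_mul, Complex.norm_real, Real.norm_of_nonneg (by have := Real.pi_pos; positivity)]
        have := Real.pi_pos
        have hk : ((t - x) ^ 2 + s ^ 2)⁻¹ ≤ 5 * (1 + x ^ 2)⁻¹ := by
          rw [← div_eq_mul_inv, le_div_iff₀ (by positivity), inv_mul_le_iff₀ (by positivity)]
          obtain ⟨a, b⟩ := ht
          have hx2 : 2 ≤ |x| := by
            rw [← sq_abs] at hx; nlinarith [abs_nonneg x]
          rcases abs_cases x with ⟨e, _⟩ | ⟨e, _⟩ <;> nlinarith [sq_nonneg s]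
        gcongr
        exact hb t
      · rw [hs t ht, indicator_of_notMem ht]; simp
    · rw [integral_indicator measurableSet_Ioo, setIntegral_const]
      simp only [Real.volume_real_Ioo, smul_eq_mul]
      have h5 : 1 / Real.pi ≤ 1 / 2 := by
        apply one_div_le_one_div_of_le (by norm_num) (by linarith [Real.pi_gt_three])
      have h6 : max (1 - (-1 : ℝ)) 0 = 2 := by norm_num
      rw [h6]
      have h7 : 0 ≤ M * (5 * (1 + x ^ 2)⁻¹) := by positivity
      nlinarith

lemma cc_bdd {f : ℝ → ℂ} {M : ℝ} (hM : 0 ≤ M) (hf : Integrable f) (hb : ∀ t, ‖f t‖ ≤ M)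
    (hs : ∀ t, t ∉ Ioo (-1 : ℝ) 1 → f t = 0) : CC f := by
  apply cc_approx hf
  intro ε hε
  have hfb : ∀ x, ‖f x‖ ≤ 5 * M * (1 + x ^ 2)⁻¹ := by
    intro x
    by_cases hx : x ∈ Ioo (-1 : ℝ) 1
    · refine (hb x).trans ?_
      rw [← div_eq_mul_inv, le_div_iff₀ (by positivity)]
      obtain ⟨a, b⟩ := hx
      have : x ^ 2 ≤ 1 := by nlinarith
      nlinarith
    · rw [hs x hx, norm_zero]; positivity
  have hfw : Integrable fun t => ‖f t‖ * (1 + t ^ 2)⁻¹ := by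
    refine hf.norm.mono' (hf.norm.aestronglyMeasurable.mul (by fun_prop : Measurable fun t : ℝ => (1 + t ^ 2)⁻¹).aestronglyMeasurable)
      (Eventually.of_forall fun t => ?_)
    rw [Real.norm_of_nonneg (by positivity)]
    exact mul_le_of_le_one_right (norm_nonneg _) (inv_le_one_of_one_le₀ (by nlinarith [sq_nonneg t]))
  have h12 := psi_dct (l := nhdsWithin (0 : ℝ) (Ioi 0)) (F := fun s t => f t - PO s f t)
    (G := fun t => 10 * M * (1 + t ^ 2)⁻¹) hε ?_ ?_ ?_ ?_
  · obtain ⟨h1, h2⟩ := h12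
    obtain ⟨s, ⟨a, b⟩, c⟩ := ((h1.and h2).and self_mem_nhdsWithin).exists
    exact ⟨PO s f, po_integrable hf c, cc_po hf c, a, b⟩
  · filter_upwards [self_mem_nhdsWithin] with s h
    exact hf.aestronglyMeasurable.sub (po_integrable hf h).aestronglyMeasurable
  · have i1 : Integrable fun t : ℝ => (10 * M / ε + (10 * M / ε) ^ 2) * (1 + t ^ 2)⁻¹ := integrable_inv_one_add_sq.const_mul _
    refine i1.mono' ?_ (Eventually.of_forall fun t => ?_)
    · exact (psi_measurable.comp (by fun_prop : Measurable fun t : ℝ => 10 * M * (1 + t ^ 2)⁻¹ / ε)).aestronglyMeasurable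
    · rw [Real.norm_of_nonneg (psi_nonneg (by positivity))]
      refine (psi_le_sq (by positivity)).trans ?_
      have hw : (1 + t ^ 2)⁻¹ ≤ 1 := inv_le_one_of_one_le₀ (by nlinarith [sq_nonneg t])
      have hw0 : 0 ≤ (1 + t ^ 2)⁻¹ := by positivity
      have e : 10 * M * (1 + t ^ 2)⁻¹ / ε = (10 * M / ε) * (1 + t ^ 2)⁻¹ := by ring
      rw [e, mul_pow, add_mul]
      gcongr
      nlinarith
  · filter_upwards [self_mem_nhdsWithin, nhdsWithin_le_nhds (ge_mem_nhds (one_pos (α := ℝ)))] with s a b t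
    have := po_bound hM hf hb hs a b t
    have := hfb t
    have := norm_sub_le (f t) (PO s f t)
    linarith
  · filter_upwards [poisson_ae hf.aestronglyMeasurable hfw] with x hx
    have := hx.const_sub (f x)
    rw [sub_self] at this
    exact this

lemma cc_good {f : ℝ → ℂ} (hf : Integrable f) (hp : ∀ lam : ℝ, 0 < lam → Integrable fun t => psi (‖f t‖ / lam))
    (hs : ∀ t, t ∉ Ioo (-1 : ℝ) 1 → f t = 0) : CC f := by
  apply cc_approx hf
  intro ε hε
  set p : ℕ → ℝ → ℂ := fun n t => if ‖f t‖ ≤ n then f t else 0 with hpd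
  have hpm : ∀ n, AEStronglyMeasurable (p n) := by
    intro n
    have : Measurable (fun z : ℂ => if ‖z‖ ≤ n then z else 0) :=
      Measurable.ite (measurableSet_le measurable_norm measurable_const) measurable_id measurable_const
    exact (this.comp_aemeasurable hf.aestronglyMeasurable.aemeasurable).aestronglyMeasurable
  have hple : ∀ n t, ‖p n t‖ ≤ ‖f t‖ := by
    intro n t; simp only [hpd]; split_ifs <;> simp
  have hpi : ∀ n, Integrable (p n) := fun n => hf.norm.mono' (hpm n) (Eventually.of_forall (hple n))
  have h12 := psi_dct (l := (atTop : Filter ℕ)) (F := fun n t => f t - p n t)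
    (G := fun t => ‖f t‖) hε ?_ (hp ε hε) ?_ ?_
  · obtain ⟨h1, h2⟩ := h12
    obtain ⟨n, a, b⟩ := (h1.and h2).exists
    refine ⟨p n, hpi n, cc_bdd (M := n) (by positivity) (hpi n) ?_ ?_, a, b⟩
    · intro t; simp only [hpd]; split_ifs with h
      · exact h
      · simp
    · intro t ht; simp only [hpd]; rw [hs t ht]; simp
  · exact Eventually.of_forall fun n => hf.aestronglyMeasurable.sub (hpm n)
  · refine Eventually.of_forall fun n t => ?_
    simp only [hpd]; split_ifs <;> simp
  · refine Eventually.of_forall fun t => ?_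
    refine tendsto_const_nhds.congr' ?_
    filter_upwards [eventually_ge_atTop ⌈‖f t‖⌉₊] with n hn
    have : ‖f t‖ ≤ n := (Nat.le_ceil _).trans (by exact_mod_cast hn)
    simp [hpd, this]

lemma limit_exists {f : ℝ → ℂ} (hf : Integrable f) (hp : ∀ lam : ℝ, 0 < lam → Integrable fun t => psi (‖f t‖ / lam))
    (hs : ∀ t, t ∉ Ioo (-1 : ℝ) 1 → f t = 0) {lam : ℝ} (hl : 0 < lam) (h1 : ∫ t, psi (‖f t‖ / lam) ≤ 1) :
    ∃ g : ℝ → ℂ, AEStronglyMeasurable g ∧ Integrable (fun t => ‖g t‖ * (1 + t ^ 2)⁻¹) ∧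
      ∫ t, ‖g t‖ * (1 + t ^ 2)⁻¹ ≤ 800 * lam ∧
      ∀ᵐ x : ℝ, Tendsto (fun y : ℝ => CT f (x + y * Complex.I)) (nhdsWithin 0 (Ioi 0)) (nhds (g x)) := by
  set e : ℕ → ℝ := fun n => 1 / ((n : ℝ) + 1) with he
  have he0 : ∀ n, 0 < e n := fun n => by simp only [he]; positivity
  have het : Tendsto e atTop (nhds 0) := tendsto_one_div_add_atTop_nhds_zero_nat
  set G : ℕ → ℝ → ℂ := fun n x => CT f (x + e n * Complex.I) * (((1 + x ^ 2)⁻¹ : ℝ) : ℂ) with hG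
  have hGi : ∀ n, Integrable (G n) := fun n => ct_w_integrable hf (he0 n)
  set F : ℕ → (ℝ →₁[volume] ℂ) := fun n => (hGi n).toL1 (G n) with hF
  have hcau : CauchySeq F := by
    rw [Metric.cauchySeq_iff]
    intro ε hε
    obtain ⟨η0, hη0, hc⟩ := cc_good hf hp hs (ε / 2) (by positivity)
    obtain ⟨N, hN⟩ := eventually_atTop.1 (het.eventually (gt_mem_nhds hη0))
    refine ⟨N, fun m hm n hn => ?_⟩
    rw [dist_eq_norm]
    simp only [hF]
    rw [← Integrable.toL1_sub, L1.norm_of_fun_eq_integral_norm]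
    refine lt_of_le_of_lt (le_of_eq_of_le ?_ (hc (e m) (e n) (he0 m) (hN m hm) (he0 n) (hN n hn))) (by linarith)
    congr 1; ext x
    simp only [Pi.sub_apply, hG]
    rw [← sub_mul, norm_mul, Complex.norm_real, Real.norm_of_nonneg (by positivity)]
  obtain ⟨H, hH⟩ := cauchySeq_tendsto_of_complete hcau
  have hHi : Integrable H := L1.integrable_coeFn H
  set g : ℝ → ℂ := fun x => H x * ((1 + x ^ 2 : ℝ) : ℂ) with hg
  have hgn : ∀ x, ‖g x‖ * (1 + x ^ 2)⁻¹ = ‖H x‖ := by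
    intro x
    simp only [hg]
    rw [norm_mul, Complex.norm_real, Real.norm_of_nonneg (by positivity)]
    field_simp
  have hgm : AEStronglyMeasurable g :=
    hHi.aestronglyMeasurable.mul (by fun_prop : Continuous fun x : ℝ => ((1 + x ^ 2 : ℝ) : ℂ)).aestronglyMeasurable
  have hgi : Integrable (fun t => ‖g t‖ * (1 + t ^ 2)⁻¹) := by
    simp_rw [hgn]; exact hHi.norm
  refine ⟨g, hgm, hgi, ?_, ?_⟩
  · simp_rw [hgn]
    rw [← L1.norm_eq_integral_norm]
    refine le_of_tendsto hH.norm (Eventually.of_forall fun n => ?_)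
    simp only [hF]
    rw [L1.norm_of_fun_eq_integral_norm]
    refine le_of_eq_of_le ?_ (key_complex hf hl (hp lam hl) h1 (he0 n))
    congr 1; ext x
    simp only [hG]
    rw [norm_mul, Complex.norm_real, Real.norm_of_nonneg (by positivity)]
  · have hdiff : Tendsto (fun n => ∫ x, ‖G n x - H x‖) atTop (nhds 0) := by
      have := tendsto_iff_norm_sub_tendsto_zero.1 hH
      refine this.congr fun n => ?_
      rw [L1.norm_eq_integral_norm]
      apply integral_congr_ae
      filter_upwards [Lp.coeFn_sub (F n) H, (hGi n).coeFn_toL1] with x h1 h2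
      rw [h1, Pi.sub_apply]
      simp only [hF]
      rw [h2]
    have hrep : ∀ x y : ℝ, 0 < y → CT f (x + y * Complex.I) =
        ∫ t, g t * (((y / Real.pi) * ((t - x) ^ 2 + y ^ 2)⁻¹ : ℝ) : ℂ) := by
      intro x y hy
      have := Real.pi_pos
      set b : ℝ → ℝ := fun u => (1 + u ^ 2) * ((y / Real.pi) * ((u - x) ^ 2 + y ^ 2)⁻¹) with hb
      set K : ℝ := (2 + (1 + 2 * x ^ 2) / y ^ 2) * (y / Real.pi) with hK
      have hb0 : ∀ u, 0 ≤ b u := fun u => by simp only [hb]; positivity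
      have hbK : ∀ u, b u ≤ K := by
        intro u
        simp only [hb, hK]
        rw [mul_left_comm, mul_comm]
        gcongr
        rw [← div_eq_mul_inv, div_le_iff₀ (by positivity)]
        have : 0 ≤ (1 + 2 * x ^ 2) / y ^ 2 * (u - x) ^ 2 := by positivity
        have e : (1 + 2 * x ^ 2) / y ^ 2 * y ^ 2 = 1 + 2 * x ^ 2 := by field_simp
        nlinarith [sq_nonneg (u - 2 * x), sq_nonneg y]
      have hbm : AEStronglyMeasurable (fun u => (b u : ℂ)) := by
        refine (?_ : Measurable _).aestronglyMeasurable
        simp only [hb]; fun_prop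
      have hbn : ∀ u, ‖(b u : ℂ)‖ ≤ K := fun u => by
        rw [Complex.norm_real, Real.norm_of_nonneg (hb0 u)]; exact hbK u
      have iG : ∀ n, Integrable (fun u => G n u * b u) := fun n => (hGi n).mul_bdd (c := K) hbm (Eventually.of_forall hbn)
      have iH : Integrable (fun u => H u * b u) := hHi.mul_bdd (c := K) hbm (Eventually.of_forall hbn)
      have t1 : Tendsto (fun n => ∫ u, G n u * b u) atTop (nhds (∫ u, H u * b u)) := by
        rw [tendsto_iff_norm_sub_tendsto_zero]
        refine squeeze_zero (fun n => norm_nonneg _) (fun n => ?_) (by simpa using hdiff.const_mul K)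
        rw [← integral_sub (iG n) iH, ← integral_const_mul]
        refine norm_integral_le_of_norm_le ((((hGi n).sub hHi).norm).const_mul K) (Eventually.of_forall fun u => ?_)
        rw [← sub_mul, norm_mul, mul_comm]
        exact mul_le_mul_of_nonneg_right (hbn u) (norm_nonneg _)
      have t2 : Tendsto (fun n => CT f (x + y * Complex.I + e n * Complex.I)) atTop (nhds (CT f (x + y * Complex.I))) := by
        have hca : ContinuousAt (CT f) (x + y * Complex.I) := by
          refine (ct_diff hf).continuousOn.continuousAt ?_
          exact (isOpen_lt continuous_const Complex.continuous_im).mem_nhds (by simpa using hy)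
        refine hca.tendsto.comp ?_
        have : Tendsto (fun n => (x : ℂ) + y * Complex.I + e n * Complex.I) atTop (nhds ((x : ℂ) + y * Complex.I + ((0 : ℝ) : ℂ) * Complex.I)) :=
          (((Complex.continuous_ofReal.tendsto _).comp het).mul_const _).const_add _
        simpa using this
      have heq : ∀ n, ∫ u, G n u * b u = CT f (x + y * Complex.I + e n * Complex.I) := by
        intro n
        have h := ct_semigroup hf (he0 n) x hy
        have hh : ∀ u : ℝ, G n u * b u = ((y / Real.pi : ℝ) : ℂ) * (CT f (u + e n * Complex.I) * ((((u - x) ^ 2 + y ^ 2)⁻¹ : ℝ) : ℂ)) := by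
          intro u
          simp only [hG, hb]
          have : (((1 + u ^ 2)⁻¹ : ℝ) : ℂ) * ((1 + u ^ 2 : ℝ) : ℂ) = 1 := by
            rw [← Complex.ofReal_mul, inv_mul_cancel₀ (by positivity), Complex.ofReal_one]
          rw [Complex.ofReal_mul (1 + u ^ 2), Complex.ofReal_mul (y / Real.pi)]
          linear_combination (CT f (u + e n * Complex.I) * ((y / Real.pi : ℝ) : ℂ) * ((((u - x) ^ 2 + y ^ 2)⁻¹ : ℝ) : ℂ)) * this
        simp_rw [hh]
        rw [integral_const_mul, h, ← mul_assoc, ← Complex.ofReal_mul, show y / Real.pi * (Real.pi / y) = 1 by field_simp]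
        simp
      simp_rw [heq] at t1
      rw [tendsto_nhds_unique t2 t1]
      congr 1; ext u
      simp only [hg, hb]
      push_cast; ring
    filter_upwards [poisson_ae hgm hgi] with x hx
    refine hx.congr' ?_
    filter_upwards [self_mem_nhdsWithin] with y hy
    exact (hrep x y hy).symm

lemma fht_bound {f : ℝ → ℂ} (hf : Integrable ((Ioo (-1 : ℝ) 1).indicator f))
    (hp : ∀ lam : ℝ, 0 < lam → Integrable fun t => psi (‖(Ioo (-1 : ℝ) 1).indicator f t‖ / lam))
    {lam : ℝ} (hl : 0 < lam) (h1 : ∫ t, psi (‖(Ioo (-1 : ℝ) 1).indicator f t‖ / lam) ≤ 1) :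
    IntegrableOn (FHT f) (Set.Ioo (-1 : ℝ) 1) ∧ ∫ t in Set.Ioo (-1 : ℝ) 1, ‖FHT f t‖ ≤ 1601 * lam := by
  set f0 := (Ioo (-1 : ℝ) 1).indicator f with hf0
  obtain ⟨g, hgm, hgi, hgb, hlim⟩ := limit_exists hf hp (fun t ht => indicator_of_notMem ht f) hl h1
  have hae : ∀ᵐ x : ℝ, FHT f x = g x - Complex.I * f0 x := by
    filter_upwards [hlim, ct_trunc hf] with x a b
    have c := a.sub b
    refine Tendsto.limUnder_eq (c.congr fun y => ?_)
    rw [sub_sub_cancel]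
    congr 1
    have hms : MeasurableSet {t : ℝ | y ≤ |t - x|} := measurableSet_le measurable_const (by fun_prop)
    have hset : {t : ℝ | t ∈ Set.Ioo (-1 : ℝ) 1 ∧ y ≤ |t - x|} = {t : ℝ | y ≤ |t - x|} ∩ Ioo (-1 : ℝ) 1 := by
      ext t; simp only [mem_ofPred_eq, mem_inter_iff]; tauto
    rw [hset, ← setIntegral_indicator measurableSet_Ioo]
    congr 1; ext t
    by_cases ht : t ∈ Ioo (-1 : ℝ) 1 <;> simp [hf0, ht]
  have hw : ∀ x ∈ Ioo (-1 : ℝ) 1, ‖g x‖ ≤ 2 * (‖g x‖ * (1 + x ^ 2)⁻¹) := by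
    intro x hx
    rw [← div_eq_mul_inv, mul_div_assoc', le_div_iff₀ (by positivity)]
    have : x ^ 2 ≤ 1 := by nlinarith [hx.1, hx.2]
    nlinarith [norm_nonneg (g x)]
  have hgI : IntegrableOn g (Ioo (-1 : ℝ) 1) :=
    (hgi.integrableOn.const_mul 2).mono' hgm.restrict ((ae_restrict_iff' measurableSet_Ioo).2 (Eventually.of_forall hw))
  have hfI : IntegrableOn (fun x => Complex.I * f0 x) (Ioo (-1 : ℝ) 1) := (hf.const_mul _).integrableOn
  have hae' := ae_restrict_of_ae (s := Ioo (-1 : ℝ) 1) hae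
  refine ⟨(hgI.sub hfI).congr (hae'.mono fun x hx => hx.symm), ?_⟩
  have e1 : ∫ t in Set.Ioo (-1 : ℝ) 1, ‖FHT f t‖ = ∫ t in Set.Ioo (-1 : ℝ) 1, ‖g t - Complex.I * f0 t‖ :=
    integral_congr_ae (hae'.mono fun x hx => by simp only [hx])
  rw [e1]
  have e2 : ∫ t in Set.Ioo (-1 : ℝ) 1, ‖g t - Complex.I * f0 t‖ ≤ ∫ t in Set.Ioo (-1 : ℝ) 1, (‖g t‖ + ‖f0 t‖) := by
    refine integral_mono (hgI.sub hfI).norm (hgI.norm.add hf.norm.integrableOn) fun t => ?_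
    refine (norm_sub_le _ _).trans ?_
    rw [norm_mul, Complex.norm_I, one_mul]
  refine e2.trans ?_
  rw [integral_add hgI.norm hf.norm.integrableOn]
  have e3 : ∫ t in Set.Ioo (-1 : ℝ) 1, ‖g t‖ ≤ 2 * (800 * lam) := by
    refine (setIntegral_mono_on hgI.norm (hgi.integrableOn.const_mul 2) measurableSet_Ioo hw).trans ?_
    rw [integral_const_mul]
    gcongr
    exact (setIntegral_le_integral hgi (Eventually.of_forall fun t => by simp only [Pi.zero_apply]; positivity)).trans hgb
  have e4 : ∫ t in Set.Ioo (-1 : ℝ) 1, ‖f0 t‖ ≤ lam := by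
    refine (setIntegral_le_integral hf.norm (Eventually.of_forall fun t => norm_nonneg _)).trans ?_
    have : ∫ t, ‖f0 t‖ / lam ≤ 1 := (integral_mono (hf.norm.div_const lam) (hp lam hl) fun t => psi_ge (by positivity)).trans h1
    rw [integral_div, div_le_one hl] at this
    exact this
  linarith

lemma llog_int {f : ℝ → ℂ} (hf : MemLlogL f) : IntegrableOn f (Ioo (-1 : ℝ) 1) := by
  obtain ⟨hm, hi⟩ := hf
  have hc : IntegrableOn (fun _ : ℝ => Real.exp 1) (Ioo (-1 : ℝ) 1) := integrableOn_const (by simp)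
  refine (hc.add hi).mono' hm (Eventually.of_forall fun x => ?_)
  simp only [Pi.add_apply]
  rcases le_or_gt ‖f x‖ (Real.exp 1) with h | h
  · have : 0 ≤ ‖f x‖ * max (Real.log ‖f x‖) 0 := by positivity
    linarith
  · have h1 : 1 ≤ Real.log ‖f x‖ := by
      rw [Real.le_log_iff_exp_le (lt_trans (Real.exp_pos 1) h)]; exact h.le
    have h2 := le_max_left (Real.log ‖f x‖) 0
    nlinarith [norm_nonneg (f x), Real.exp_pos 1]

lemma psi_llog {s lam : ℝ} (hs : 0 ≤ s) (hl : 0 < lam) :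
    psi (s / lam) ≤ lam⁻¹ * (1 + Real.log (1 + lam⁻¹) + Real.log 2) * s + lam⁻¹ * (s * max (Real.log s) 0) := by
  refine (psi_le (by positivity)).trans ?_
  have h1 : Real.log (1 + s / lam) ≤ Real.log (1 + lam⁻¹) + (Real.log 2 + max (Real.log s) 0) := by
    have h2 : 1 + s / lam ≤ (1 + lam⁻¹) * (2 * max s 1) := by
      have a1 := le_max_left s 1
      have a2 := le_max_right s 1
      have a3 : 0 < lam⁻¹ := by positivity
      rw [div_eq_mul_inv]
      nlinarith [mul_le_mul_of_nonneg_right a1 a3.le, mul_pos a3 (by linarith : (0 : ℝ) < max s 1)]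
    refine (Real.log_le_log (by positivity) h2).trans ?_
    rw [Real.log_mul (by positivity) (by positivity), Real.log_mul (by norm_num) (by positivity)]
    gcongr
    rcases le_total s 1 with h | h
    · rw [max_eq_right h]; simp
    · rw [max_eq_left h]; exact le_max_left _ _
  have h3 : 0 ≤ s / lam := by positivity
  calc s / lam * (1 + Real.log (1 + s / lam)) ≤ s / lam * (1 + (Real.log (1 + lam⁻¹) + (Real.log 2 + max (Real.log s) 0))) := by gcongr
    _ = _ := by ring

lemma llog_psi {f : ℝ → ℂ} (hf : MemLlogL f) {lam : ℝ} (hl : 0 < lam) :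
    IntegrableOn (fun t => psi (‖f t‖ / lam)) (Ioo (-1 : ℝ) 1) := by
  have h1 := llog_int hf
  refine ((h1.norm.const_mul (lam⁻¹ * (1 + Real.log (1 + lam⁻¹) + Real.log 2))).add (hf.2.const_mul lam⁻¹)).mono' ?_
    (Eventually.of_forall fun x => ?_)
  · exact (psi_measurable.comp_aemeasurable (hf.1.norm.aemeasurable.div_const lam)).aestronglyMeasurable
  · rw [Real.norm_of_nonneg (psi_nonneg (by positivity))]
    exact psi_llog (norm_nonneg _) hl

lemma psi_ind (f : ℝ → ℂ) (lam : ℝ) : (fun t => psi (‖(Ioo (-1 : ℝ) 1).indicator f t‖ / lam)) =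
    (Ioo (-1 : ℝ) 1).indicator (fun t => psi (‖f t‖ / lam)) := by
  ext t
  by_cases ht : t ∈ Ioo (-1 : ℝ) 1
  · simp [ht]
  · simp [ht, psi]

lemma fht_bound2 {f : ℝ → ℂ} (hf : MemLlogL f)
    {lam : ℝ} (hl : 0 < lam) (h1 : ∫ t in Ioo (-1 : ℝ) 1, psi (‖f t‖ / lam) ≤ 1) :
    IntegrableOn (FHT f) (Set.Ioo (-1 : ℝ) 1) ∧ ∫ t in Set.Ioo (-1 : ℝ) 1, ‖FHT f t‖ ≤ 1601 * lam := by
  refine fht_bound ((integrable_indicator_iff measurableSet_Ioo).2 (llog_int hf)) (fun l hl => ?_) hl ?_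
  · rw [psi_ind]
    exact (integrable_indicator_iff measurableSet_Ioo).2 (llog_psi hf hl)
  · rw [psi_ind, integral_indicator measurableSet_Ioo]
    exact h1

instance muI_finite : IsFiniteMeasure μI := by
  unfold μI; infer_instance

lemma muI_univ : μI univ = 2 := by
  unfold μI; rw [Measure.restrict_apply_univ, Real.volume_Ioo]; norm_num

def nuF (f : ℝ → ℂ) : Measure ℝ := Measure.map (fun x => ‖f x‖) μI

instance nuF_finite (f : ℝ → ℂ) : IsFiniteMeasure (nuF f) := by
  unfold nuF; infer_instance

lemma nuF_univ {f : ℝ → ℂ} (hf : AEStronglyMeasurable f μI) : nuF f univ = 2 := by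
  unfold nuF
  rw [Measure.map_apply_of_aemeasurable hf.norm.aemeasurable MeasurableSet.univ, preimage_univ, muI_univ]

lemma distFun_eq {f : ℝ → ℂ} (hf : AEStronglyMeasurable f μI) (s : ℝ) : distFun f s = (nuF f (Ioi s)).toReal := by
  unfold distFun nuF
  rw [Measure.map_apply_of_aemeasurable hf.norm.aemeasurable measurableSet_Ioi]
  unfold μI
  rw [Measure.restrict_apply' measurableSet_Ioo]
  congr 2
  ext x; simp only [mem_ofPred_eq, mem_inter_iff, mem_preimage, mem_Ioi]; tauto

lemma distFun_eq' {f : ℝ → ℂ} (hf : AEStronglyMeasurable f μI) (s : ℝ) :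
    ENNReal.ofReal (distFun f s) = nuF f (Ioi s) := by
  rw [distFun_eq hf, ENNReal.ofReal_toReal (measure_ne_top _ _)]

lemma distFun_nonneg (f : ℝ → ℂ) (s : ℝ) : 0 ≤ distFun f s := ENNReal.toReal_nonneg

lemma distFun_le {f : ℝ → ℂ} (hf : AEStronglyMeasurable f μI) (s : ℝ) : distFun f s ≤ 2 := by
  rw [distFun_eq hf]
  refine ENNReal.toReal_le_of_le_ofReal (by norm_num) ?_
  refine (measure_mono (subset_univ _)).trans ?_
  rw [nuF_univ hf]; simp

lemma nuF_Iic {f : ℝ → ℂ} (hf : AEStronglyMeasurable f μI) (s : ℝ) : nuF f (Iic s) = ENNReal.ofReal (2 - distFun f s) := by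
  have h := measure_compl (measurableSet_Ioi (a := s)) (measure_ne_top (nuF f) _)
  rw [compl_Ioi, nuF_univ hf] at h
  rw [h, ENNReal.ofReal_sub _ (distFun_nonneg f s), distFun_eq' hf]; simp

lemma distFun_anti {f : ℝ → ℂ} (hf : AEStronglyMeasurable f μI) {s s' : ℝ} (h : s ≤ s') : distFun f s' ≤ distFun f s := by
  rw [distFun_eq hf, distFun_eq hf]
  exact ENNReal.toReal_mono (measure_ne_top _ _) (measure_mono (Ioi_subset_Ioi h))

lemma distFun_nonempty {f : ℝ → ℂ} (hf : AEStronglyMeasurable f μI) {t : ℝ} (ht : 0 < t) :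
    {lam : ℝ | 0 ≤ lam ∧ distFun f lam ≤ t}.Nonempty := by
  have h := tendsto_measure_Iic_atTop (nuF f)
  rw [nuF_univ hf] at h
  have h2 := (ENNReal.tendsto_toReal (by norm_num)).comp h
  have h3 : Tendsto (fun s => 2 - distFun f s) atTop (nhds 2) := by
    refine (h2.congr fun s => ?_)
    simp only [Function.comp]
    rw [nuF_Iic hf, ENNReal.toReal_ofReal (by linarith [distFun_le hf s])]
  have h4 := h3.eventually (lt_mem_nhds (show 2 - t < 2 by linarith))
  obtain ⟨s, hs1, hs2⟩ := (h4.and (eventually_ge_atTop 0)).exists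
  exact ⟨s, hs2, by linarith⟩

lemma decRearr_bdd (f : ℝ → ℂ) (t : ℝ) : BddBelow {lam : ℝ | 0 ≤ lam ∧ distFun f lam ≤ t} := ⟨0, fun _ h => h.1⟩

lemma decRearr_nonneg (f : ℝ → ℂ) (t : ℝ) : 0 ≤ decRearr f t := Real.sInf_nonneg fun _ h => h.1

lemma decRearr_le_iff {f : ℝ → ℂ} (hf : AEStronglyMeasurable f μI) {s t : ℝ} (hs : 0 ≤ s) (ht : 0 < t) :
    decRearr f t ≤ s ↔ distFun f s ≤ t := by
  constructor
  · intro h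
    have h1 : ∀ s', s < s' → distFun f s' ≤ t := by
      intro s' hs'
      obtain ⟨r, hr, hr'⟩ := exists_lt_of_csInf_lt (distFun_nonempty hf ht) (lt_of_le_of_lt h hs')
      exact (distFun_anti hf hr'.le).trans hr.2
    have h2 : Ioi s = ⋃ n : ℕ, Ioi (s + 1 / ((n : ℝ) + 1)) := by
      ext x
      simp only [mem_Ioi, mem_iUnion]
      constructor
      · intro hx
        obtain ⟨n, hn⟩ := exists_nat_one_div_lt (sub_pos.2 hx)
        exact ⟨n, by linarith⟩
      · rintro ⟨n, hn⟩
        have : 0 < 1 / ((n : ℝ) + 1) := by positivity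
        linarith
    have hmono : Monotone (fun n : ℕ => Ioi (s + 1 / ((n : ℝ) + 1))) := by
      intro m n hmn
      apply Ioi_subset_Ioi
      gcongr
    rw [distFun_eq hf]
    refine ENNReal.toReal_le_of_le_ofReal ht.le ?_
    rw [h2, hmono.measure_iUnion]
    refine iSup_le fun n => ?_
    rw [← distFun_eq' hf]
    exact ENNReal.ofReal_le_ofReal (h1 _ (by have : 0 < 1 / ((n : ℝ) + 1) := by positivity
                                             linarith))
  · intro h
    exact csInf_le (decRearr_bdd f t) ⟨hs, h⟩

lemma decRearr_anti {f : ℝ → ℂ} (hf : AEStronglyMeasurable f μI) {t t' : ℝ} (ht : 0 < t) (h : t ≤ t') :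
    decRearr f t' ≤ decRearr f t :=
  csInf_le_csInf (decRearr_bdd f t') (distFun_nonempty hf ht) fun _ hx => ⟨hx.1, hx.2.trans h⟩

lemma decRearr_aem {f : ℝ → ℂ} (hf : AEStronglyMeasurable f μI) :
    AEMeasurable (decRearr f) (volume.restrict (Ioo (0 : ℝ) 2)) :=
  aemeasurable_restrict_of_antitoneOn measurableSet_Ioo fun _ hx _ _ hxy => decRearr_anti hf hx.1 hxy

lemma map_eq {f : ℝ → ℂ} (hf : AEStronglyMeasurable f μI) :
    nuF f = Measure.map (decRearr f) (volume.restrict (Ioo (0 : ℝ) 2)) := by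
  apply Measure.ext_of_Iic
  intro s
  rw [Measure.map_apply_of_aemeasurable (decRearr_aem hf) measurableSet_Iic, Measure.restrict_apply' measurableSet_Ioo]
  rcases lt_or_ge s 0 with hs | hs
  · have e1 : decRearr f ⁻¹' Iic s ∩ Ioo 0 2 = ∅ := by
      ext t; simp only [mem_inter_iff, mem_preimage, mem_Iic, mem_empty_iff_false, iff_false]
      intro h; linarith [decRearr_nonneg f t, h.1]
    rw [e1, measure_empty]
    unfold nuF
    rw [Measure.map_apply_of_aemeasurable hf.norm.aemeasurable measurableSet_Iic]
    have e2 : (fun x => ‖f x‖) ⁻¹' Iic s = ∅ := by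
      ext t; simp only [mem_preimage, mem_Iic, mem_empty_iff_false, iff_false]
      intro h; linarith [norm_nonneg (f t)]
    rw [e2, measure_empty]
  · rw [nuF_Iic hf]
    have hd := distFun_nonneg f s
    have e1 : decRearr f ⁻¹' Iic s ∩ Ioo 0 2 = {t | 0 < t} ∩ Ico (distFun f s) 2 := by
      ext t
      simp only [mem_inter_iff, mem_preimage, mem_Iic, mem_Ioo, mem_Ico, mem_ofPred_eq]
      constructor
      · rintro ⟨a, b, c⟩
        exact ⟨b, (decRearr_le_iff hf hs b).1 a, c⟩
      · rintro ⟨b, a, c⟩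
        exact ⟨(decRearr_le_iff hf hs b).2 a, b, c⟩
    rw [e1]
    apply le_antisymm
    · rw [← Real.volume_Ioo]
      refine measure_mono fun t ht => ⟨lt_of_le_of_lt hd ht.1, ht.1.le, ht.2⟩
    · rw [← Real.volume_Ico]
      exact measure_mono inter_subset_right

lemma transfer_int {f : ℝ → ℂ} (hf : AEStronglyMeasurable f μI) {φ : ℝ → ℝ} (hφ : Measurable φ) :
    (IntegrableOn (fun x => φ ‖f x‖) (Ioo (-1 : ℝ) 1) ↔ IntegrableOn (fun t => φ (decRearr f t)) (Ioo (0 : ℝ) 2)) ∧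
    ∫ x in Ioo (-1 : ℝ) 1, φ ‖f x‖ = ∫ t in Ioo (0 : ℝ) 2, φ (decRearr f t) := by
  constructor
  · have a := integrable_map_measure (hφ.aestronglyMeasurable (μ := nuF f)) hf.norm.aemeasurable
    have b := integrable_map_measure (hφ.aestronglyMeasurable (μ := Measure.map (decRearr f) (volume.restrict (Ioo (0 : ℝ) 2))))
      (decRearr_aem hf)
    rw [← map_eq hf] at b
    exact a.symm.trans b
  · have a := integral_map hf.norm.aemeasurable (hφ.aestronglyMeasurable (μ := nuF f))
    have b := integral_map (decRearr_aem hf)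
      (hφ.aestronglyMeasurable (μ := Measure.map (decRearr f) (volume.restrict (Ioo (0 : ℝ) 2))))
    rw [← map_eq hf] at b
    exact a.symm.trans b

lemma young_log {a b : ℝ} (ha : 0 ≤ a) : a * b ≤ a * max (Real.log a) 0 + Real.exp b := by
  rcases ha.eq_or_lt with rfl | ha
  · simp [(Real.exp_pos b).le]
  · have h1 := Real.add_one_le_exp (b - Real.log a)
    rw [Real.exp_sub, Real.exp_log ha, le_div_iff₀ ha] at h1
    have h2 := le_max_left (Real.log a) 0
    nlinarith

lemma log_ge_one {t : ℝ} (h0 : 0 < t) (h2 : t < 2) : 1 ≤ Real.log (2 * Real.exp 1 / t) := by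
  rw [Real.le_log_iff_exp_le (by positivity), le_div_iff₀ h0]
  nlinarith [Real.exp_pos 1]

lemma norm_integrable {f : ℝ → ℂ} (hf : MemLlogL f) :
    IntegrableOn (fun t => decRearr f t * Real.log (2 * Real.exp 1 / t)) (Ioo (0 : ℝ) 2) := by
  have i1 : IntegrableOn (fun t => decRearr f t) (Ioo (0 : ℝ) 2) :=
    (transfer_int hf.1 (φ := id) measurable_id).1.1 (llog_int hf).norm
  have i2 : IntegrableOn (fun t => decRearr f t * max (Real.log (decRearr f t)) 0) (Ioo (0 : ℝ) 2) :=
    (transfer_int hf.1 (φ := fun s => s * max (Real.log s) 0) (by fun_prop)).1.1 hf.2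
  have i3 : IntegrableOn (fun t : ℝ => t ^ (-1 / 2 : ℝ)) (Ioo (0 : ℝ) 2) :=
    (intervalIntegral.integrableOn_Ioo_rpow_iff (by norm_num)).2 (by norm_num)
  have i4 := ((i1.const_mul (Real.log (2 * Real.exp 1))).add ((i2.const_mul 2).add (i3.const_mul 2)))
  refine i4.mono' ?_ ((ae_restrict_iff' measurableSet_Ioo).2 (Eventually.of_forall fun t ht => ?_))
  · exact ((decRearr_aem hf.1).mul (by fun_prop : Measurable fun t : ℝ => Real.log (2 * Real.exp 1 / t)).aemeasurable).aestronglyMeasurable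
  · have hl := log_ge_one ht.1 ht.2
    have hd := decRearr_nonneg f t
    rw [Real.norm_of_nonneg (by positivity)]
    simp only [Pi.add_apply]
    have hy := young_log (b := - Real.log t / 2) hd
    have he : Real.exp (- Real.log t / 2) = t ^ (-1 / 2 : ℝ) := by
      rw [Real.rpow_def_of_pos ht.1]; congr 1; ring
    rw [he] at hy
    rw [Real.log_div (by positivity) ht.1.ne']
    linarith

lemma decRearr_bound {f : ℝ → ℂ} (hf : MemLlogL f) {t : ℝ} (ht : t ∈ Ioo (0 : ℝ) 2) :
    t * decRearr f t ≤ llogLNorm f := by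
  have hi := norm_integrable hf
  have hsub : Ioo 0 t ⊆ Ioo (0 : ℝ) 2 := Ioo_subset_Ioo_right ht.2.le
  calc t * decRearr f t = ∫ u in Ioo 0 t, decRearr f t := by
        rw [setIntegral_const]; simp [ht.1.le]
    _ ≤ ∫ u in Ioo 0 t, decRearr f u * Real.log (2 * Real.exp 1 / u) := by
        refine setIntegral_mono_on (integrableOn_const (by simp)) (hi.mono_set hsub) measurableSet_Ioo fun u hu => ?_
        have h1 := decRearr_anti hf.1 hu.1 hu.2.le
        have h2 := log_ge_one hu.1 (hu.2.trans ht.2)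
        nlinarith [decRearr_nonneg f u]
    _ ≤ llogLNorm f := by
        refine setIntegral_mono_set hi ?_ hsub.eventuallyLE
        refine (ae_restrict_iff' measurableSet_Ioo).2 (Eventually.of_forall fun u hu => ?_)
        have h2 := log_ge_one hu.1 hu.2
        exact mul_nonneg (decRearr_nonneg f u) (by linarith)

lemma llogLNorm_nonneg (f : ℝ → ℂ) : 0 ≤ llogLNorm f :=
  setIntegral_nonneg measurableSet_Ioo fun u hu =>
    mul_nonneg (decRearr_nonneg f u) (by linarith [log_ge_one hu.1 hu.2])

lemma psi_norm {f : ℝ → ℂ} (hf : MemLlogL f) {lam : ℝ} (hl : 0 < lam) (hN : 2 * llogLNorm f ≤ lam) :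
    ∫ t in Ioo (-1 : ℝ) 1, psi (‖f t‖ / lam) ≤ 1 := by
  have hφ : Measurable fun s : ℝ => psi (s / lam) := psi_measurable.comp (by fun_prop)
  obtain ⟨a, b⟩ := transfer_int hf.1 hφ
  rw [b]
  have hi := a.1 (llog_psi hf hl)
  have hn := norm_integrable hf
  calc _ ≤ ∫ t in Ioo (0 : ℝ) 2, (2 / lam) * (decRearr f t * Real.log (2 * Real.exp 1 / t)) := by
        refine setIntegral_mono_on hi (hn.const_mul _) measurableSet_Ioo fun t ht => ?_
        have hb := decRearr_bound hf ht
        have h0 := decRearr_nonneg f t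
        have h1 := log_ge_one ht.1 ht.2
        have ht0 := ht.1
        have ht2 := ht.2
        have hd : 0 ≤ decRearr f t / lam := by positivity
        have hle : 1 + decRearr f t / lam ≤ 2 * Real.exp 1 / t := by
          have e1 : decRearr f t / lam ≤ 1 / (2 * t) := by
            rw [div_le_div_iff₀ hl (by positivity)]
            linarith
          have e2 : 1 + 1 / (2 * t) ≤ 2 * Real.exp 1 / t := by
            rw [le_div_iff₀ ht0]
            have : (1 + 1 / (2 * t)) * t = t + 1 / 2 := by field_simp
            rw [this]
            linarith [Real.add_one_le_exp (1 : ℝ)]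
          linarith
        have hlog : Real.log (1 + decRearr f t / lam) ≤ Real.log (2 * Real.exp 1 / t) := Real.log_le_log (by positivity) hle
        refine (psi_le hd).trans ?_
        calc _ ≤ decRearr f t / lam * (2 * Real.log (2 * Real.exp 1 / t)) := by gcongr; linarith
          _ = _ := by ring
    _ = 2 / lam * llogLNorm f := by rw [integral_const_mul]; rfl
    _ ≤ 1 := by rw [div_mul_eq_mul_div, div_le_one hl]; exact hN

theorem FHT_bounded_LlogL_to_L1 :
    ∃ C : ℝ, 0 < C ∧ ∀ f : ℝ → ℂ, MemLlogL f →
      IntegrableOn (FHT f) (Set.Ioo (-1 : ℝ) 1) ∧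
      ∫ t in Set.Ioo (-1 : ℝ) 1, ‖FHT f t‖ ≤ C * llogLNorm f := by
  refine ⟨3202, by norm_num, fun f hf => ?_⟩
  have hN := llogLNorm_nonneg f
  have key : ∀ ε : ℝ, 0 < ε → IntegrableOn (FHT f) (Set.Ioo (-1 : ℝ) 1) ∧
      ∫ t in Set.Ioo (-1 : ℝ) 1, ‖FHT f t‖ ≤ 1601 * (2 * llogLNorm f + ε) := fun ε hε =>
    fht_bound2 hf (by linarith) (psi_norm hf (by linarith) (by linarith))
  refine ⟨(key 1 one_pos).1, le_of_forall_pos_le_add fun ε hε => ?_⟩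
  have := (key (ε / 1601) (by positivity)).2
  linarith
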